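/- arXiv:1410.7095 — 4 statements merged into one kernel-verified Lean document; each statement's English description precedes it below -/
import Mathlib

section
/- Let K : ℝ^d → ℝ be an interaction potential with ∇K bounded and Lipschitz on ℝ^d. For N particles define γ_i(x₁,…,x_N) = −(1/N) Σ_{j≠i} ∇K(x_i − x_j) for i = 1,…,N. Let x(t) = (x₁(t),…,x_N(t)) be the (unique) solution on [0,T] of the first-order system dx_i/dt = γ_i(x) with x(0) = x⁰. For each ε > 0 let (x_ε(t), v_ε(t)) be the solution of the second-order system dx_i/dt = v_i, ε dv_i/dt = −v_i + γ_i(x), with initial data (x⁰, v⁰). Then as ε → 0 one has x_ε(t) → x(t) for every t ∈ [0,T], and v_ε(t) → γ(x(t)) = (γ₁(x(t)),…,γ_N(x(t))) for every t ∈ (0,T]. -/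
open Set Filter Topology

/-- The first-order velocity field of the aggregation particle model:
`γ i x = -(1/N) ∑_{j ≠ i} ∇K (x i - x j)`. -/
noncomputable def aggVelocity {d N : ℕ}
    (gradK : EuclideanSpace ℝ (Fin d) → EuclideanSpace ℝ (Fin d))
    (x : Fin N → EuclideanSpace ℝ (Fin d)) (i : Fin N) : EuclideanSpace ℝ (Fin d) :=
  -(1 / (N : ℝ)) • ∑ j ∈ Finset.univ.filter (fun j => j ≠ i), gradK (x i - x j)

/-!
Put `y = x_ε + ε v_ε`. Adding the two equations gives `y' = F x_ε`, whose right-hand side differs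
from `F y` by at most `C ε ‖v_ε‖`; Grönwall's inequality compares `y` with the solution of
`x' = F x` as soon as `v_ε` is bounded uniformly in `ε`. That bound comes from Duhamel's formula:
`v_ε` relaxes towards `F x_ε` at rate `ε⁻¹`, so `‖v_ε t‖` is at most
`‖v⁰‖ + sup_{s ≤ t} ‖F (x_ε s)‖`, which is controlled by `∫₀ᵗ ‖v_ε‖`, and Grönwall applies again.
Finally `F ∘ x_ε` is Lipschitz uniformly in `ε`, so `v_ε` follows it up to `O(ε)` once the initial
layer `exp (-t / ε)` has decayed.
-/

open MeasureTheory Real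
open scoped NNReal

section IntegralGronwall

lemma hasDerivWithinAt_integral_of_continuousOn {E : Type*} [NormedAddCommGroup E]
    [NormedSpace ℝ E] [CompleteSpace E] {f : ℝ → E} {a b t : ℝ}
    (hf : ContinuousOn f (Icc a b)) (ht : t ∈ Icc a b) :
    HasDerivWithinAt (fun u ↦ ∫ s in a..u, f s) (f t) (Icc a b) t := by
  have : Fact (t ∈ Icc a b) := ⟨ht⟩
  have hint : IntervalIntegrable f volume a t :=
    (hf.mono (Icc_subset_Icc_right ht.2)).intervalIntegrable_of_Icc ht.1
  exact intervalIntegral.integral_hasDerivWithinAt_right hint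
    (hf.stronglyMeasurableAtFilter_nhdsWithin measurableSet_Icc t) (hf t ht)

lemma hasDerivWithinAt_Ici_of_Icc {E : Type*} [NormedAddCommGroup E] [NormedSpace ℝ E]
    {f : ℝ → E} {f' : E} {a b t : ℝ} (hf : HasDerivWithinAt f f' (Icc a b) t)
    (ht : t ∈ Ico a b) : HasDerivWithinAt f f' (Ici t) t :=
  hf.mono_of_mem_nhdsWithin (Icc_mem_nhdsGE_of_mem ht)

theorem le_mul_exp_of_le_add_mul_integral {u : ℝ → ℝ} {a b R C : ℝ} (hC : 0 ≤ C)
    (hu : ContinuousOn u (Icc a b))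
    (hle : ∀ t ∈ Icc a b, u t ≤ R + C * ∫ s in a..t, u s) {t : ℝ} (ht : t ∈ Icc a b) :
    u t ≤ R * exp (C * (t - a)) := by
  have hderiv : ∀ s ∈ Icc a b,
      HasDerivWithinAt (fun s ↦ R + C * ∫ τ in a..s, u τ) (C * u s) (Icc a b) s := fun s hs ↦
    ((hasDerivWithinAt_integral_of_continuousOn hu hs).const_mul C).const_add R
  calc u t ≤ R + C * ∫ s in a..t, u s := hle t ht
    _ ≤ gronwallBound R C 0 (t - a) :=
      le_gronwallBound_of_liminf_deriv_right_le (HasDerivWithinAt.continuousOn hderiv)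
        (fun s hs _ hr ↦ (hasDerivWithinAt_Ici_of_Icc (hderiv s (Ico_subset_Icc_self hs))
          hs).liminf_right_slope_le hr)
        (by simp)
        (fun s hs ↦ by
          rw [add_zero]
          exact mul_le_mul_of_nonneg_left (hle s (Ico_subset_Icc_self hs)) hC) t ht
    _ = R * exp (C * (t - a)) := gronwallBound_ε0 R C (t - a)

lemma gronwallBound_mul_self (δ K η t : ℝ) :
    gronwallBound δ K (K * η) t = (δ + η) * exp (K * t) - η := by
  rcases eq_or_ne K 0 with rfl | hK
  · simp [gronwallBound_K0]
  · rw [gronwallBound_of_K_ne_0 hK]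
    field_simp
    ring

end IntegralGronwall

section InertialSystem

variable {E : Type*} [NormedAddCommGroup E] [NormedSpace ℝ E]

section Relaxation

variable {v f : ℝ → E} {r T : ℝ}

lemma hasDerivWithinAt_exp_smul_of_relaxation {s : Set ℝ} {t : ℝ}
    (hv : HasDerivWithinAt v (r • (-v t + f t)) s t) :
    HasDerivWithinAt (fun t ↦ exp (r * t) • v t) ((r * exp (r * t)) • f t) s t := by
  have hexp : HasDerivAt (fun t ↦ exp (r * t)) (exp (r * t) * r) t := by
    simpa using ((hasDerivAt_id t).const_mul r).exp
  convert! hexp.hasDerivWithinAt.smul hv using 1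
  module

theorem norm_le_of_relaxation {b g : ℝ → ℝ} (hr : 0 ≤ r)
    (hv : IsIntegralCurveOn v (fun t w ↦ r • (-w + f t)) (Icc 0 T))
    (hb : IsIntegralCurveOn b (fun t w ↦ r • (-w + g t)) (Icc 0 T))
    (hfg : ∀ t ∈ Icc 0 T, ‖f t‖ ≤ g t) (h0 : ‖v 0‖ ≤ b 0) {t : ℝ} (ht : t ∈ Icc 0 T) :
    ‖v t‖ ≤ b t := by
  have hv' s (hs : s ∈ Icc 0 T) := hasDerivWithinAt_exp_smul_of_relaxation (hv s hs)
  have hb' s (hs : s ∈ Icc 0 T) := hasDerivWithinAt_exp_smul_of_relaxation (hb s hs)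
  have hscaled : ‖exp (r * t) • v t‖ ≤ exp (r * t) • b t := by
    refine image_norm_le_of_norm_deriv_right_le_deriv_boundary'
      (HasDerivWithinAt.continuousOn hv')
      (fun s hs ↦ hasDerivWithinAt_Ici_of_Icc (hv' s (Ico_subset_Icc_self hs)) hs)
      (by simpa using h0) (HasDerivWithinAt.continuousOn hb')
      (fun s hs ↦ hasDerivWithinAt_Ici_of_Icc (hb' s (Ico_subset_Icc_self hs)) hs)
      (fun s hs ↦ ?_) ht
    rw [norm_smul, norm_of_nonneg (by positivity), smul_eq_mul]
    exact mul_le_mul_of_nonneg_left (hfg s (Ico_subset_Icc_self hs)) (by positivity)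
  rw [norm_smul, norm_of_nonneg (exp_pos _).le, smul_eq_mul] at hscaled
  exact le_of_mul_le_mul_left hscaled (exp_pos _)

lemma isIntegralCurveOn_relaxation_affine (A k B : ℝ) (hr : r ≠ 0) (s : Set ℝ) :
    IsIntegralCurveOn (fun t ↦ A + k * (T - t) + k / r + exp (-(r * t)) * B)
      (fun t w ↦ r • (-w + (A + k * (T - t)))) s := fun t _ ↦ by
  have haff : HasDerivAt (fun t ↦ A + k * (T - t) + k / r) (-k) t := by
    simpa using ((((hasDerivAt_id t).const_sub T).const_mul k).const_add A).add_const (k / r)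
  have hexp : HasDerivAt (fun t ↦ exp (-(r * t))) (exp (-(r * t)) * -r) t := by
    simpa using ((hasDerivAt_id t).const_mul r).neg.exp
  convert! (haff.add (hexp.mul_const B)).hasDerivWithinAt using 1
  simp only [smul_eq_mul]
  field_simp
  ring

theorem norm_sub_le_of_relaxation {c : E} {A k : ℝ} (hr : 0 < r) (hT : 0 ≤ T) (hk : 0 ≤ k)
    (hv : IsIntegralCurveOn v (fun t w ↦ r • (-w + f t)) (Icc 0 T))
    (hf : ∀ t ∈ Icc 0 T, ‖f t - c‖ ≤ A + k * (T - t)) :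
    ‖v T - c‖ ≤ A + k / r + exp (-(r * T)) * ‖v 0 - c‖ := by
  have hvc : IsIntegralCurveOn (fun t ↦ v t - c) (fun t w ↦ r • (-w + (f t - c))) (Icc 0 T) :=
    fun t ht ↦ by
      convert! (hv t ht).sub_const c using 1
      module
  have h0 : 0 ≤ A + k * (T - 0) := (norm_nonneg _).trans (hf 0 (left_mem_Icc.2 hT))
  have hkr : 0 ≤ k / r := by positivity
  have hbound := norm_le_of_relaxation hr.le hvc
    (isIntegralCurveOn_relaxation_affine A k ‖v 0 - c‖ hr.ne' _) hf
    (by simp only [mul_zero, neg_zero, exp_zero]; linarith) (right_mem_Icc.2 hT)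
  simpa using hbound

end Relaxation

/-- `(x, v)` solves the inertial system `x' = v`, `ε v' = -v + F x` on the set of times `s`, with
derivatives taken within `s`. The second equation is divided by `ε`, so this is only meaningful
for `ε ≠ 0`. -/
structure IsInertialTrajectory (F : E → E) (ε : ℝ) (s : Set ℝ) (x v : ℝ → E) : Prop where
  position : IsIntegralCurveOn x (fun t _ ↦ v t) s
  velocity : IsIntegralCurveOn v (fun t w ↦ ε⁻¹ • (-w + F (x t))) s

namespace IsInertialTrajectory

variable {F : E → E} {C : ℝ≥0} {ε T t : ℝ} {x v : ℝ → E}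

lemma mono {s s' : Set ℝ} (h : IsInertialTrajectory F ε s x v) (hs : s' ⊆ s) :
    IsInertialTrajectory F ε s' x v :=
  ⟨h.position.mono hs, h.velocity.mono hs⟩

lemma norm_position_sub_le_integral (h : IsInertialTrajectory F ε (Icc 0 T) x v) (hT : 0 ≤ T) :
    ‖x T - x 0‖ ≤ ∫ s in 0..T, ‖v s‖ := by
  have hderiv : ∀ s ∈ Ioo 0 T, HasDerivAt x (v s) s := fun s hs ↦
    (h.position s (Ioo_subset_Icc_self hs)).hasDerivAt (Icc_mem_nhds hs.1 hs.2)
  exact norm_sub_le_integral_of_norm_deriv_le_of_le hT h.position.continuousOn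
    (fun s hs ↦ (hderiv s hs).differentiableAt.differentiableWithinAt)
    (.of_forall fun s hs ↦ by rw [(hderiv s hs).deriv])
    (h.velocity.continuousOn.norm.intervalIntegrable_of_Icc hT)

theorem norm_velocity_le_add_mul_integral (h : IsInertialTrajectory F ε (Icc 0 T) x v)
    (hF : LipschitzWith C F) (hε : 0 < ε) (hT : 0 ≤ T) :
    ‖v T‖ ≤ ‖v 0‖ + ‖F (x 0)‖ + C * ∫ s in 0..T, ‖v s‖ := by
  have hforce : ∀ s ∈ Icc 0 T, ‖F (x s)‖ ≤ ‖F (x 0)‖ + C * ∫ τ in 0..T, ‖v τ‖ := fun s hs ↦ by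
    have hx : ‖x s - x 0‖ ≤ ∫ τ in 0..T, ‖v τ‖ :=
      ((h.mono (Icc_subset_Icc_right hs.2)).norm_position_sub_le_integral hs.1).trans <|
        intervalIntegral.integral_mono_interval le_rfl hs.1 hs.2
          (.of_forall fun _ ↦ norm_nonneg _)
          (h.velocity.continuousOn.norm.intervalIntegrable_of_Icc hT)
    calc ‖F (x s)‖ ≤ ‖F (x 0)‖ + ‖F (x s) - F (x 0)‖ := norm_le_norm_add_norm_sub' _ _
      _ ≤ ‖F (x 0)‖ + C * ‖x s - x 0‖ := by gcongr; exact hF.norm_sub_le _ _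
      _ ≤ ‖F (x 0)‖ + C * ∫ τ in 0..T, ‖v τ‖ := by gcongr
  have hduhamel := norm_sub_le_of_relaxation (c := 0) (k := 0) (inv_pos.2 hε) hT le_rfl
    h.velocity (by simpa using hforce)
  have hdecay : exp (-(ε⁻¹ * T)) * ‖v 0‖ ≤ ‖v 0‖ :=
    mul_le_of_le_one_left (norm_nonneg _) (exp_le_one_iff.2 (neg_nonpos.2 (by positivity)))
  simp only [sub_zero, zero_div, add_zero] at hduhamel
  linarith

theorem norm_velocity_le (h : IsInertialTrajectory F ε (Icc 0 T) x v) (hF : LipschitzWith C F)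
    (hε : 0 < ε) (ht : t ∈ Icc 0 T) :
    ‖v t‖ ≤ (‖v 0‖ + ‖F (x 0)‖) * exp (C * t) := by
  simpa using le_mul_exp_of_le_add_mul_integral C.2 h.velocity.continuousOn.norm
    (fun s hs ↦
      (h.mono (Icc_subset_Icc_right hs.2)).norm_velocity_le_add_mul_integral hF hε hs.1) ht

lemma isIntegralCurveOn_position_add_smul_velocity {s : Set ℝ}
    (h : IsInertialTrajectory F ε s x v) (hε : ε ≠ 0) :
    IsIntegralCurveOn (fun t ↦ x t + ε • v t) (fun t _ ↦ F (x t)) s := fun t ht ↦ by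
  convert! (h.position t ht).add ((h.velocity t ht).const_smul ε) using 1
  rw [smul_inv_smul₀ hε, add_neg_cancel_left]

theorem norm_position_sub_le (h : IsInertialTrajectory F ε (Icc 0 T) x v)
    (hF : LipschitzWith C F) (hε : 0 < ε) {z : ℝ → E}
    (hz : IsIntegralCurveOn z (fun _ ↦ F) (Icc 0 T)) (h0 : x 0 = z 0)
    {R : ℝ} (hR : ∀ s ∈ Icc 0 T, ‖v s‖ ≤ R) (ht : t ∈ Icc 0 T) :
    ‖x t - z t‖ ≤ ε * ((‖v 0‖ + R) * exp (C * t)) := by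
  have hy := h.isIntegralCurveOn_position_add_smul_velocity hε.ne'
  have hdist : ∀ s, dist (x s) (x s + ε • v s) = ε * ‖v s‖ := fun s ↦ by
    rw [dist_self_add_right, norm_smul, norm_of_nonneg hε.le]
  have hdefect : ∀ s ∈ Ico 0 T, dist (F (x s)) (F (x s + ε • v s)) ≤ C * (ε * R) := fun s hs ↦ by
    refine (hF.dist_le_mul _ _).trans ?_
    rw [hdist]
    gcongr
    exact hR s (Ico_subset_Icc_self hs)
  have hgronwall : dist (x t + ε • v t) (z t) ≤
      gronwallBound (ε * ‖v 0‖) C (C * (ε * R) + 0) (t - 0) :=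
    dist_le_of_approx_trajectories_ODE (v := fun _ ↦ F) (fun _ ↦ hF) hy.continuousOn
      (fun s hs ↦ hasDerivWithinAt_Ici_of_Icc (hy s (Ico_subset_Icc_self hs)) hs) hdefect
      hz.continuousOn
      (fun s hs ↦ hasDerivWithinAt_Ici_of_Icc (hz s (Ico_subset_Icc_self hs)) hs)
      (fun _ _ ↦ (dist_self _).le) (by rw [← h0, dist_comm, hdist]) t ht
  rw [add_zero, sub_zero, gronwallBound_mul_self] at hgronwall
  calc ‖x t - z t‖ = dist (x t) (z t) := (dist_eq_norm _ _).symm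
    _ ≤ ε * ‖v t‖ + dist (x t + ε • v t) (z t) := hdist t ▸ dist_triangle _ _ _
    _ ≤ ε * R + ((ε * ‖v 0‖ + ε * R) * exp (C * t) - ε * R) := by
      gcongr
      exact hR t ht
    _ = ε * ((‖v 0‖ + R) * exp (C * t)) := by ring

theorem norm_velocity_sub_le (h : IsInertialTrajectory F ε (Icc 0 T) x v)
    (hF : LipschitzWith C F) (hε : 0 < ε) {R : ℝ} (hR : ∀ s ∈ Icc 0 T, ‖v s‖ ≤ R) (hT : 0 ≤ T) :
    ‖v T - F (x T)‖ ≤ ε * (C * R) + exp (-(ε⁻¹ * T)) * ‖v 0 - F (x T)‖ := by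
  have hR0 : 0 ≤ R := (norm_nonneg _).trans (hR T (right_mem_Icc.2 hT))
  have hforce : ∀ s ∈ Icc 0 T, ‖F (x s) - F (x T)‖ ≤ 0 + C * R * (T - s) := fun s hs ↦ by
    have hx : ‖x s - x T‖ ≤ R * ‖s - T‖ :=
      (convex_Icc 0 T).norm_image_sub_le_of_norm_hasDerivWithin_le h.position hR
        (right_mem_Icc.2 hT) hs
    rw [norm_sub_rev s, norm_of_nonneg (sub_nonneg.2 hs.2)] at hx
    calc ‖F (x s) - F (x T)‖ ≤ C * ‖x s - x T‖ := hF.norm_sub_le _ _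
      _ ≤ C * (R * (T - s)) := by gcongr
      _ = 0 + C * R * (T - s) := by ring
  have hduhamel := norm_sub_le_of_relaxation (inv_pos.2 hε) hT (by positivity) h.velocity hforce
  rwa [zero_add, div_inv_eq_mul, mul_comm _ ε] at hduhamel

lemma exists_norm_velocity_le (hF : LipschitzWith C F) (x₀ v₀ : E) (T : ℝ) :
    ∃ R, ∀ ε > 0, ∀ x v, IsInertialTrajectory F ε (Icc 0 T) x v → x 0 = x₀ → v 0 = v₀ →
      ∀ t ∈ Icc 0 T, ‖v t‖ ≤ R := by
  refine ⟨(‖v₀‖ + ‖F x₀‖) * exp (C * T), ?_⟩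
  rintro ε hε x v h rfl rfl t ht
  refine (h.norm_velocity_le hF hε ht).trans ?_
  gcongr
  exact ht.2

end IsInertialTrajectory

section ZeroInertiaLimit

variable {F : E → E} {C : ℝ≥0} {T : ℝ} {x : ℝ → E} {v₀ : E} {xε vε : ℝ → ℝ → E}

theorem tendsto_position_of_isInertialTrajectory (hF : LipschitzWith C F)
    (hx : IsIntegralCurveOn x (fun _ ↦ F) (Icc 0 T))
    (htraj : ∀ ε > 0, IsInertialTrajectory F ε (Icc 0 T) (xε ε) (vε ε))
    (hxε0 : ∀ ε > 0, xε ε 0 = x 0) (hvε0 : ∀ ε > 0, vε ε 0 = v₀) {t : ℝ} (ht : t ∈ Icc 0 T) :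
    Tendsto (fun ε ↦ xε ε t) (𝓝[>] 0) (𝓝 (x t)) := by
  obtain ⟨R, hR⟩ := IsInertialTrajectory.exists_norm_velocity_le hF (x 0) v₀ T
  have hbound : Tendsto (fun ε ↦ ε * ((‖v₀‖ + R) * exp (C * t))) (𝓝[>] 0) (𝓝 0) := by
    have hid : Tendsto (fun ε : ℝ ↦ ε) (𝓝[>] 0) (𝓝 0) := tendsto_id'.2 nhdsWithin_le_nhds
    simpa using hid.mul_const ((‖v₀‖ + R) * exp (C * t))
  rw [tendsto_iff_norm_sub_tendsto_zero]
  refine squeeze_zero' (.of_forall fun _ ↦ norm_nonneg _) ?_ hbound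
  filter_upwards [self_mem_nhdsWithin] with ε hpos
  rw [← hvε0 ε hpos]
  exact (htraj ε hpos).norm_position_sub_le hF hpos hx (hxε0 ε hpos)
    (hR ε hpos _ _ (htraj ε hpos) (hxε0 ε hpos) (hvε0 ε hpos)) ht

lemma tendsto_exp_neg_inv_mul {t : ℝ} (ht : 0 < t) :
    Tendsto (fun ε : ℝ ↦ exp (-(ε⁻¹ * t))) (𝓝[>] 0) (𝓝 0) :=
  tendsto_exp_neg_atTop_nhds_zero.comp (tendsto_inv_nhdsGT_zero.atTop_mul_const ht)

theorem tendsto_velocity_of_isInertialTrajectory (hF : LipschitzWith C F)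
    (hx : IsIntegralCurveOn x (fun _ ↦ F) (Icc 0 T))
    (htraj : ∀ ε > 0, IsInertialTrajectory F ε (Icc 0 T) (xε ε) (vε ε))
    (hxε0 : ∀ ε > 0, xε ε 0 = x 0) (hvε0 : ∀ ε > 0, vε ε 0 = v₀) {t : ℝ} (ht : t ∈ Ioc 0 T) :
    Tendsto (fun ε ↦ vε ε t) (𝓝[>] 0) (𝓝 (F (x t))) := by
  obtain ⟨R, hR⟩ := IsInertialTrajectory.exists_norm_velocity_le hF (x 0) v₀ t
  have hFx : Tendsto (fun ε ↦ F (xε ε t)) (𝓝[>] 0) (𝓝 (F (x t))) :=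
    (hF.continuous.tendsto _).comp <|
      tendsto_position_of_isInertialTrajectory hF hx htraj hxε0 hvε0 (Ioc_subset_Icc_self ht)
  have hbound : Tendsto (fun ε ↦ ε * (C * R) + exp (-(ε⁻¹ * t)) * ‖v₀ - F (xε ε t)‖)
      (𝓝[>] 0) (𝓝 0) := by
    have hid : Tendsto (fun ε : ℝ ↦ ε) (𝓝[>] 0) (𝓝 0) := tendsto_id'.2 nhdsWithin_le_nhds
    simpa using (hid.mul_const (C * R)).add
      ((tendsto_exp_neg_inv_mul ht.1).mul (hFx.const_sub v₀).norm)
  have hgap : Tendsto (fun ε ↦ vε ε t - F (xε ε t)) (𝓝[>] 0) (𝓝 0) := by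
    refine squeeze_zero_norm' ?_ hbound
    filter_upwards [self_mem_nhdsWithin] with ε hpos
    have h := (htraj ε hpos).mono (Icc_subset_Icc_right ht.2)
    rw [← hvε0 ε hpos]
    exact h.norm_velocity_sub_le hF hpos
      (hR ε hpos _ _ h (hxε0 ε hpos) (hvε0 ε hpos)) ht.1.le
  simpa using hgap.add hFx

theorem zero_inertia_limit_particle_model_general (hF : LipschitzWith C F)
    (hx : IsIntegralCurveOn x (fun _ ↦ F) (Icc 0 T))
    (htraj : ∀ ε > 0, IsInertialTrajectory F ε (Icc 0 T) (xε ε) (vε ε))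
    (hxε0 : ∀ ε > 0, xε ε 0 = x 0) (hvε0 : ∀ ε > 0, vε ε 0 = v₀) :
    (∀ t ∈ Icc 0 T, Tendsto (fun ε ↦ xε ε t) (𝓝[>] 0) (𝓝 (x t))) ∧
    (∀ t ∈ Ioc 0 T, Tendsto (fun ε ↦ vε ε t) (𝓝[>] 0) (𝓝 (F (x t)))) :=
  ⟨fun _ ↦ tendsto_position_of_isInertialTrajectory hF hx htraj hxε0 hvε0,
    fun _ ↦ tendsto_velocity_of_isInertialTrajectory hF hx htraj hxε0 hvε0⟩

end ZeroInertiaLimit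

end InertialSystem

lemma lipschitzWith_aggVelocity {d N : ℕ}
    {gradK : EuclideanSpace ℝ (Fin d) → EuclideanSpace ℝ (Fin d)} {L : ℝ≥0}
    (hK : LipschitzWith L gradK) : LipschitzWith (2 * L) (aggVelocity (N := N) gradK) := by
  refine LipschitzWith.of_dist_le_mul fun x y ↦ (dist_pi_le_iff (by positivity)).2 fun i ↦ ?_
  have hN : (0 : ℝ) < N := Nat.cast_pos.2 i.pos
  have hpair : ∀ j, ‖gradK (x i - x j) - gradK (y i - y j)‖ ≤ 2 * L * dist x y := fun j ↦ by
    have heval := LipschitzWith.eval (α := fun _ : Fin N ↦ EuclideanSpace ℝ (Fin d))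
    have hij := hK.comp ((heval i).sub (heval j))
    rw [one_add_one_eq_two, mul_comm] at hij
    simpa [dist_eq_norm] using hij.dist_le_mul x y
  have hsum : ‖∑ j with j ≠ i, (gradK (x i - x j) - gradK (y i - y j))‖ ≤
      N * (2 * L * dist x y) := by
    refine (norm_sum_le_of_le _ fun j _ ↦ hpair j).trans ?_
    rw [Finset.sum_const, nsmul_eq_mul]
    gcongr
    simpa using Finset.card_le_univ (Finset.univ.filter (· ≠ i))
  calc dist (aggVelocity gradK x i) (aggVelocity gradK y i)
      = 1 / (N : ℝ) * ‖∑ j with j ≠ i, (gradK (x i - x j) - gradK (y i - y j))‖ := by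
        rw [aggVelocity, aggVelocity, dist_eq_norm, ← smul_sub, ← Finset.sum_sub_distrib,
          norm_smul, norm_neg, norm_of_nonneg (by positivity)]
    _ ≤ 1 / (N : ℝ) * (N * (2 * L * dist x y)) := by gcongr
    _ = ↑(2 * L) * dist x y := by push_cast; field_simp

/-- **Zero-inertia limit of the second-order aggregation particle model.**
With `∇K` bounded and Lipschitz, let `x` solve the first-order system
`dxᵢ/dt = γᵢ(x)` on `[0,T]` with `x 0 = x⁰`, and for each `ε > 0` let
`(xε ε, vε ε)` solve `dxᵢ/dt = vᵢ`, `ε dvᵢ/dt = -vᵢ + γᵢ(x)` with initial data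
`(x⁰, v⁰)`. Then `xε ε t → x t` for all `t ∈ [0,T]` and
`vε ε t → γ(x t)` for all `t ∈ (0,T]`, as `ε → 0⁺`. -/
theorem zero_inertia_limit_particle_model
    (d N : ℕ) (hN : 0 < N)
    (gradK : EuclideanSpace ℝ (Fin d) → EuclideanSpace ℝ (Fin d))
    (M : ℝ) (L : NNReal)
    (hbound : ∀ z, ‖gradK z‖ ≤ M)
    (hlip : LipschitzWith L gradK)
    (T : ℝ) (hT : 0 < T)
    (x₀ v₀ : Fin N → EuclideanSpace ℝ (Fin d))
    (x : ℝ → Fin N → EuclideanSpace ℝ (Fin d))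
    (hx0 : x 0 = x₀)
    (hx : ∀ i, ∀ t ∈ Icc (0:ℝ) T,
      HasDerivAt (fun s => x s i) (aggVelocity gradK (x t) i) t)
    (xε vε : ℝ → ℝ → Fin N → EuclideanSpace ℝ (Fin d))
    (hxε0 : ∀ ε > (0:ℝ), xε ε 0 = x₀)
    (hvε0 : ∀ ε > (0:ℝ), vε ε 0 = v₀)
    (hxε : ∀ ε > (0:ℝ), ∀ i, ∀ t ∈ Icc (0:ℝ) T,
      HasDerivAt (fun s => xε ε s i) (vε ε t i) t)
    (hvε : ∀ ε > (0:ℝ), ∀ i, ∀ t ∈ Icc (0:ℝ) T,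
      HasDerivAt (fun s => vε ε s i)
        (ε⁻¹ • (-(vε ε t i) + aggVelocity gradK (xε ε t) i)) t) :
    (∀ t ∈ Icc (0:ℝ) T,
      Tendsto (fun ε => xε ε t) (𝓝[>] (0:ℝ)) (𝓝 (x t))) ∧
    (∀ t ∈ Ioc (0:ℝ) T,
      Tendsto (fun ε => vε ε t) (𝓝[>] (0:ℝ)) (𝓝 (fun i => aggVelocity gradK (x t) i))) := by
  subst hx0
  exact zero_inertia_limit_particle_model_general (lipschitzWith_aggVelocity hlip)
    (fun t ht ↦ (hasDerivAt_pi.2 fun i ↦ hx i t ht).hasDerivWithinAt)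
    (fun ε hε ↦
      ⟨fun t ht ↦ (hasDerivAt_pi.2 fun i ↦ hxε ε hε i t ht).hasDerivWithinAt,
        fun t ht ↦ (hasDerivAt_pi.2 fun i ↦ hvε ε hε i t ht).hasDerivWithinAt⟩)
    hxε0 hvε0
end

section
/- Let E : [0,T] × ℝ^d → ℝ^d be bounded and Lipschitz continuous (jointly in (t,x)). Let x : [0,T] → ℝ^d solve dx/dt = −E(t,x), x(0) = x₀. For each ε > 0 let (x_ε, v_ε) : [0,T] → ℝ^d × ℝ^d solve dx/dt = v, ε dv/dt = −v − E(t,x), with (x_ε(0), v_ε(0)) = (x₀, v₀). Then as ε → 0, x_ε converges to x uniformly on [0,T], and v_ε(t) → −E(t, x(t)) for every t ∈ (0,T]. -/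
open Set Filter Topology

/-!
A relaxing variable `ε u' = g - u` is an exponential average of the signal `g`: it never leaves a
ball containing `u` initially and `g` throughout, and outside an initial layer of width `O(ε)` it
follows `g`. Both limits come from this principle.

* For the position `ξ`, put `X = ξ - x` and `Z = X + ε v`. The derivative `E(t, x) - E(t, ξ)` of `Z`
  no longer contains `ε⁻¹`, and `X` relaxes to `Z - ε x'`. So `‖Z‖` is controlled by `L ∫ ‖X‖` and
  `‖X‖` by `sup ‖Z‖ + ε sup ‖x'‖`; in the weighted norm `sup e^{-2Lt}‖X(t)‖` the resulting loop
  gains a factor `1/2` and closes.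
* The velocity `v` relaxes to the signal `-E(t, ξ)`, which then converges uniformly to `-E(t, x)`.
-/

section Relaxation

variable {V : Type*} [NormedAddCommGroup V] [NormedSpace ℝ V]

theorem norm_sub_le_of_relaxation_s1 {u g : ℝ → V} {c : V} {ε a b R : ℝ} (hε : 0 < ε) (hab : a ≤ b)
    (hu : IsIntegralCurveOn u (fun t y ↦ ε⁻¹ • (g t - y)) (Icc a b))
    (hg : ∀ t ∈ Icc a b, ‖g t - c‖ ≤ R) :
    ‖u b - c‖ ≤ Real.exp (-((b - a) / ε)) * ‖u a - c‖ + (1 - Real.exp (-((b - a) / ε))) * R := by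
  let w : ℝ → ℝ := fun t ↦ Real.exp ((t - a) / ε)
  have hw : ∀ t, HasDerivAt w (w t * (1 / ε)) t := fun t ↦
    (((hasDerivAt_id t).sub_const a).div_const ε).exp
  have hwu : ∀ t ∈ Icc a b,
      HasDerivWithinAt (fun t ↦ w t • (u t - c)) ((w t / ε) • (g t - c)) (Icc a b) t := fun t ht ↦
    ((hw t).hasDerivWithinAt.smul ((hu t ht).sub_const c)).congr_deriv (by module)
  have hbarrier : ‖w b • (u b - c)‖ ≤ ‖u a - c‖ + (w b - 1) * R := by
    refine image_norm_le_of_norm_deriv_right_le_deriv_boundary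
      (B := fun t ↦ ‖u a - c‖ + (w t - 1) * R) (B' := fun t ↦ w t * (1 / ε) * R)
      (fun t ht ↦ (hwu t ht).continuousWithinAt)
      (fun t ht ↦ (hwu t (Ico_subset_Icc_self ht)).mono_of_mem_nhdsWithin
        (Icc_mem_nhdsGE_of_mem ht))
      (by simp [w]) (fun t ↦ (((hw t).sub_const 1).mul_const R).const_add _)
      (fun t ht ↦ ?_) (right_mem_Icc.2 hab)
    rw [norm_smul, Real.norm_of_nonneg (by positivity), ← mul_one_div]
    exact mul_le_mul_of_nonneg_left (hg t (Ico_subset_Icc_self ht)) (by positivity)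
  have hwb : 0 < w b := Real.exp_pos _
  rw [norm_smul, Real.norm_of_nonneg hwb.le, ← le_div_iff₀' hwb] at hbarrier
  have hwb_inv : Real.exp (-((b - a) / ε)) = (w b)⁻¹ := Real.exp_neg _
  rw [hwb_inv]
  exact hbarrier.trans_eq (by field_simp)

theorem norm_sub_le_of_relaxation_of_norm_sub_le {u g : ℝ → V} {c : V} {ε a b R : ℝ}
    (hε : 0 < ε) (hab : a ≤ b)
    (hu : IsIntegralCurveOn u (fun t y ↦ ε⁻¹ • (g t - y)) (Icc a b))
    (hg : ∀ t ∈ Icc a b, ‖g t - c‖ ≤ R) (ha : ‖u a - c‖ ≤ R) : ‖u b - c‖ ≤ R := by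
  have h := norm_sub_le_of_relaxation_s1 hε hab hu hg
  have := mul_le_mul_of_nonneg_left ha (Real.exp_pos (-((b - a) / ε))).le
  linarith

theorem norm_sub_le_exp_mul_add_of_relaxation {u g : ℝ → V} {c : V} {ε r t B R : ℝ} (hε : 0 < ε)
    (hr : 0 ≤ r) (hrt : r ≤ t) (hu : IsIntegralCurveOn u (fun t y ↦ ε⁻¹ • (g t - y)) (Icc 0 t))
    (hu0 : ‖u 0‖ ≤ B) (hg : ∀ s ∈ Icc 0 t, ‖g s‖ ≤ B)
    (hg_near : ∀ s ∈ Icc (t - r) t, ‖g s - c‖ ≤ R) :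
    ‖u t - c‖ ≤ Real.exp (-(r / ε)) * (B + ‖c‖) + R := by
  have hstart : 0 ≤ t - r := sub_nonneg.2 hrt
  have htr : t - r ≤ t := sub_le_self t hr
  have hu_bound : ‖u (t - r)‖ ≤ B := by
    have hsub : Icc 0 (t - r) ⊆ Icc 0 t := Icc_subset_Icc_right htr
    simpa only [sub_zero] using norm_sub_le_of_relaxation_of_norm_sub_le (c := 0) hε hstart
      (hu.mono hsub) (fun s hs ↦ by simpa only [sub_zero] using hg s (hsub hs))
      (by simpa only [sub_zero] using hu0)
  have hR : 0 ≤ R := (norm_nonneg _).trans (hg_near t (right_mem_Icc.2 htr))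
  have htrack := norm_sub_le_of_relaxation_s1 hε htr (hu.mono (Icc_subset_Icc_left hstart)) hg_near
  rw [sub_sub_cancel] at htrack
  refine htrack.trans (add_le_add ?_ ?_)
  · gcongr
    exact (norm_sub_le _ _).trans (by gcongr)
  · exact mul_le_of_le_one_left hR (sub_le_self _ (Real.exp_pos _).le)

theorem tendsto_exp_neg_div_nhdsGT_zero {r : ℝ} (hr : 0 < r) :
    Tendsto (fun ε : ℝ ↦ Real.exp (-(r / ε))) (𝓝[>] 0) (𝓝 0) :=
  Real.tendsto_exp_neg_atTop_nhds_zero.comp (tendsto_inv_nhdsGT_zero.const_mul_atTop hr)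

theorem tendstoUniformlyOn_of_relaxation {u g : ℝ → ℝ → V} {g₀ : ℝ → V} {T C δ : ℝ}
    (hu : ∀ ε > 0, IsIntegralCurveOn (u ε) (fun t y ↦ ε⁻¹ • (g ε t - y)) (Icc 0 T))
    (hu0 : ∀ ε > 0, ‖u ε 0‖ ≤ C)
    (hg : TendstoUniformlyOn g g₀ (𝓝[>] 0) (Icc 0 T)) (hg₀ : ContinuousOn g₀ (Icc 0 T))
    (hδ : 0 < δ) : TendstoUniformlyOn u g₀ (𝓝[>] 0) (Icc δ T) := by
  rw [Metric.tendstoUniformlyOn_iff] at hg ⊢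
  intro η hη
  obtain ⟨M, hM⟩ := isCompact_Icc.exists_bound_of_continuousOn hg₀
  obtain ⟨ρ, hρ, hg₀ρ⟩ := Metric.uniformContinuousOn_iff_le.1
    (isCompact_Icc.uniformContinuousOn_of_continuous hg₀) (η / 4) (by positivity)
  set r := min ρ δ
  have hr : 0 < r := lt_min hρ hδ
  have hlayer : Tendsto (fun ε ↦ Real.exp (-(r / ε)) * (C + (M + η / 4) + M)) (𝓝[>] 0) (𝓝 0) := by
    simpa only [zero_mul] using (tendsto_exp_neg_div_nhdsGT_zero hr).mul_const _
  filter_upwards [hg (η / 4) (by positivity), hlayer.eventually_lt_const (half_pos hη),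
    self_mem_nhdsWithin] with ε hgε hlayerε hε t ht
  have hrt : r ≤ t := (min_le_right _ _).trans ht.1
  have htT : t ∈ Icc 0 T := ⟨hδ.le.trans ht.1, ht.2⟩
  have hsub : Icc 0 t ⊆ Icc 0 T := Icc_subset_Icc_right ht.2
  have hgg₀ : ∀ s ∈ Icc 0 t, ‖g ε s - g₀ s‖ ≤ η / 4 := fun s hs ↦ by
    rw [← dist_eq_norm, dist_comm]
    exact (hgε s (hsub hs)).le
  have hC : 0 ≤ C := (norm_nonneg _).trans (hu0 ε hε)
  have hg_bound : ∀ s ∈ Icc 0 t, ‖g ε s‖ ≤ C + (M + η / 4) := fun s hs ↦ by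
    linarith [norm_le_norm_add_norm_sub' (g ε s) (g₀ s), hM s (hsub hs), hgg₀ s hs]
  have hg_near : ∀ s ∈ Icc (t - r) t, ‖g ε s - g₀ t‖ ≤ η / 2 := fun s hs ↦ by
    have hs0 : s ∈ Icc 0 t := ⟨(sub_nonneg.2 hrt).trans hs.1, hs.2⟩
    have hst : dist s t ≤ ρ := by
      rw [dist_comm, Real.dist_eq, abs_of_nonneg (sub_nonneg.2 hs.2)]
      linarith [hs.1, min_le_left ρ δ]
    have hosc : ‖g₀ s - g₀ t‖ ≤ η / 4 := by
      simpa only [dist_eq_norm] using hg₀ρ s (hsub hs0) t htT hst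
    linarith [norm_sub_le_norm_sub_add_norm_sub (g ε s) (g₀ s) (g₀ t), hgg₀ s hs0]
  have hu0_bound : ‖u ε 0‖ ≤ C + (M + η / 4) := by
    linarith [hu0 ε hε, norm_nonneg (g₀ t), hM t htT]
  rw [dist_comm, dist_eq_norm]
  calc ‖u ε t - g₀ t‖ ≤ Real.exp (-(r / ε)) * (C + (M + η / 4) + ‖g₀ t‖) + η / 2 :=
        norm_sub_le_exp_mul_add_of_relaxation hε hr.le hrt ((hu ε hε).mono hsub)
          hu0_bound hg_bound hg_near
    _ ≤ Real.exp (-(r / ε)) * (C + (M + η / 4) + M) + η / 2 := by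
        gcongr
        exact hM t htT
    _ < η := by linarith

theorem le_two_mul_of_self_improving {α : Type*} [TopologicalSpace α] {K : Set α}
    (hK : IsCompact K) {f w : α → ℝ} (hf : ContinuousOn f K) (hw : ContinuousOn w K)
    (hw_pos : ∀ s ∈ K, 0 < w s) {A : ℝ}
    (himprove : ∀ S, (∀ s ∈ K, f s ≤ S * w s) → ∀ s ∈ K, f s ≤ (A + S / 2) * w s) :
    ∀ s ∈ K, f s ≤ 2 * A * w s := by
  intro s hs
  obtain ⟨m, hm, hmax⟩ := hK.exists_isMaxOn ⟨s, hs⟩ (hf.div hw fun r hr ↦ (hw_pos r hr).ne')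
  have hle : ∀ r ∈ K, f r ≤ f m / w m * w r := fun r hr ↦ (div_le_iff₀ (hw_pos r hr)).1 (hmax hr)
  have hself : f m / w m ≤ A + f m / w m / 2 :=
    (div_le_iff₀ (hw_pos m hm)).2 (himprove _ hle m hm)
  exact (hle s hs).trans (mul_le_mul_of_nonneg_right (by linarith) (hw_pos s hs).le)

theorem norm_le_of_norm_deriv_le_exp {z z' : ℝ → V} {L S T : ℝ}
    (hz : ∀ t ∈ Icc 0 T, HasDerivWithinAt z (z' t) (Icc 0 T) t)
    (hz' : ∀ t ∈ Icc 0 T, ‖z' t‖ ≤ L * (S * Real.exp (2 * L * t))) (hS : 0 ≤ S) :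
    ∀ t ∈ Icc 0 T, ‖z t‖ ≤ ‖z 0‖ + S / 2 * Real.exp (2 * L * t) := by
  have hexp : ∀ t : ℝ, HasDerivAt (fun t ↦ ‖z 0‖ + S / 2 * Real.exp (2 * L * t))
      (L * (S * Real.exp (2 * L * t))) t := fun t ↦
    ((((hasDerivAt_id t).const_mul (2 * L)).exp.const_mul (S / 2)).const_add _).congr_deriv
      (by simp only [id]; ring)
  refine image_norm_le_of_norm_deriv_right_le_deriv_boundary
    (fun t ht ↦ (hz t ht).continuousWithinAt)
    (fun t ht ↦ (hz t (Ico_subset_Icc_self ht)).mono_of_mem_nhdsWithin (Icc_mem_nhdsGE_of_mem ht))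
    ?_ hexp (fun t ht ↦ hz' t (Ico_subset_Icc_self ht))
  simpa using div_nonneg hS zero_le_two

theorem norm_le_of_relaxation_of_slow_drift {u g z z' : ℝ → V} {ε η A L T : ℝ}
    (hε : 0 < ε) (hL : 0 ≤ L)
    (hu : IsIntegralCurveOn u (fun t y ↦ ε⁻¹ • (g t - y)) (Icc 0 T))
    (hz : ∀ t ∈ Icc 0 T, HasDerivWithinAt z (z' t) (Icc 0 T) t)
    (hgz : ∀ t ∈ Icc 0 T, ‖g t - z t‖ ≤ η) (hz' : ∀ t ∈ Icc 0 T, ‖z' t‖ ≤ L * ‖u t‖)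
    (hu0 : ‖u 0‖ ≤ A) (hz0 : ‖z 0‖ ≤ A) :
    ∀ t ∈ Icc 0 T, ‖u t‖ ≤ 2 * (A + η) * Real.exp (2 * L * t) := by
  refine le_two_mul_of_self_improving isCompact_Icc hu.continuousOn.norm (by fun_prop)
    (fun t _ ↦ Real.exp_pos _) fun S hS t ht ↦ ?_
  have h0 : (0 : ℝ) ∈ Icc 0 T := ⟨le_rfl, ht.1.trans ht.2⟩
  have hS0 : 0 ≤ S := by simpa using (norm_nonneg _).trans (hS 0 h0)
  have hη : 0 ≤ η := (norm_nonneg _).trans (hgz 0 h0)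
  have hA : 0 ≤ A := (norm_nonneg _).trans hu0
  have hz_le := norm_le_of_norm_deriv_le_exp hz
    (fun s hs ↦ (hz' s hs).trans (mul_le_mul_of_nonneg_left (hS s hs) hL)) hS0
  have hsub : Icc 0 t ⊆ Icc 0 T := Icc_subset_Icc_right ht.2
  have hg : ∀ s ∈ Icc 0 t, ‖g s - 0‖ ≤ A + η + S / 2 * Real.exp (2 * L * t) := fun s hs ↦ by
    have hexp : S / 2 * Real.exp (2 * L * s) ≤ S / 2 * Real.exp (2 * L * t) := by
      gcongr
      exact hs.2
    rw [sub_zero]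
    linarith [norm_le_norm_add_norm_sub' (g s) (z s), hz_le s (hsub hs), hgz s (hsub hs)]
  have hut : ‖u t - 0‖ ≤ A + η + S / 2 * Real.exp (2 * L * t) := by
    refine norm_sub_le_of_relaxation_of_norm_sub_le hε ht.1 (hu.mono hsub) hg ?_
    rw [sub_zero]
    exact hu0.trans (by rw [add_assoc]; exact le_add_of_nonneg_right (by positivity))
  have hexp1 : 1 ≤ Real.exp (2 * L * t) := Real.one_le_exp (by have := ht.1; positivity)
  rw [sub_zero] at hut
  rw [add_mul]
  linarith [le_mul_of_one_le_right (add_nonneg hA hη) hexp1]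

end Relaxation

section LipschitzComposition

variable {α β γ : Type*} [PseudoMetricSpace β] [PseudoMetricSpace γ] {f : α → β → γ} {K : NNReal}
  {s : Set α} {x : α → β}

theorem continuousOn_of_lipschitzWith_of_continuousOn [TopologicalSpace α]
    (hf : ∀ a ∈ s, LipschitzWith K (f a)) (hf_cont : ∀ b, ContinuousOn (fun a ↦ f a b) s)
    (hx : ContinuousOn x s) : ContinuousOn (fun a ↦ f a (x a)) s :=
  (continuousOn_prod_of_continuousOn_lipschitzOnWith' (Function.uncurry f) K
    (fun a ha ↦ (hf a ha).lipschitzOnWith) fun b _ ↦ hf_cont b).comp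
    (continuousOn_id.prodMk hx) fun _ ha ↦ ⟨ha, mem_univ _⟩

theorem tendstoUniformlyOn_of_lipschitzWith_of_tendstoUniformlyOn {ι : Type*} {l : Filter ι}
    {y : ι → α → β} (hf : ∀ a ∈ s, LipschitzWith K (f a)) (hy : TendstoUniformlyOn y x l s) :
    TendstoUniformlyOn (fun i a ↦ f a (y i a)) (fun a ↦ f a (x a)) l s := by
  rw [Metric.tendstoUniformlyOn_iff] at hy ⊢
  intro η hη
  have hK : (0 : ℝ) < K + 1 := by positivity
  filter_upwards [hy (η / (K + 1)) (by positivity)] with i hi a ha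
  calc dist (f a (x a)) (f a (y i a)) ≤ K * dist (x a) (y i a) := (hf a ha).dist_le_mul _ _
    _ ≤ (K + 1) * dist (x a) (y i a) := by gcongr; exact le_add_of_nonneg_right zero_le_one
    _ < η := (lt_div_iff₀' hK).1 (hi a ha)

end LipschitzComposition

section ZeroInertia

variable {V : Type*} [NormedAddCommGroup V] [NormedSpace ℝ V] {E : ℝ → V → V} {L : NNReal}
  {T : ℝ} {x : ℝ → V}

theorem norm_sub_le_of_zero_inertia {ξ v : ℝ → V} {ε M : ℝ} (hε : 0 < ε)
    (hE : ∀ t ∈ Icc 0 T, LipschitzWith L (E t))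
    (hx : IsIntegralCurveOn x (fun t y ↦ -E t y) (Icc 0 T)) (hM : ∀ t ∈ Icc 0 T, ‖E t (x t)‖ ≤ M)
    (hξ : ∀ t ∈ Icc 0 T, HasDerivWithinAt ξ (v t) (Icc 0 T) t)
    (hv : IsIntegralCurveOn v (fun t w ↦ ε⁻¹ • (-E t (ξ t) - w)) (Icc 0 T)) :
    ∀ t ∈ Icc 0 T,
      ‖ξ t - x t‖ ≤ 2 * (‖ξ 0 - x 0‖ + ε * ‖v 0‖ + ε * M) * Real.exp (2 * L * t) := by
  have hεv : ∀ w : V, ‖ε • w‖ = ε * ‖w‖ := fun w ↦ by rw [norm_smul, Real.norm_of_nonneg hε.le]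
  refine norm_le_of_relaxation_of_slow_drift hε L.2
    (u := fun t ↦ ξ t - x t) (g := fun t ↦ (ξ t - x t + ε • v t) + ε • E t (x t))
    (z := fun t ↦ ξ t - x t + ε • v t) (z' := fun t ↦ E t (x t) - E t (ξ t))
    (fun t ht ↦ ((hξ t ht).sub (hx t ht)).congr_deriv ?_)
    (fun t ht ↦ (((hξ t ht).sub (hx t ht)).add ((hv t ht).const_smul ε)).congr_deriv ?_)
    (fun t ht ↦ ?_) (fun t ht ↦ ?_) ?_ ?_
  · simp only [add_assoc, add_sub_cancel_left, ← smul_add, inv_smul_smul₀ hε.ne', sub_neg_eq_add]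
  · rw [smul_inv_smul₀ hε.ne', sub_neg_eq_add]
    abel
  · rw [add_sub_cancel_left, hεv]
    exact mul_le_mul_of_nonneg_left (hM t ht) hε.le
  · rw [norm_sub_rev (ξ t)]
    exact (hE t ht).norm_sub_le _ _
  · exact le_add_of_nonneg_right (by positivity)
  · exact (norm_add_le _ _).trans_eq (by rw [hεv])

theorem tendstoUniformlyOn_of_zero_inertia {C : ℝ} {ξ v : ℝ → ℝ → V}
    (hE : ∀ t ∈ Icc 0 T, LipschitzWith L (E t))
    (hE_cont : ∀ y, ContinuousOn (fun t ↦ E t y) (Icc 0 T))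
    (hx : IsIntegralCurveOn x (fun t y ↦ -E t y) (Icc 0 T))
    (hξ : ∀ ε > 0, ∀ t ∈ Icc 0 T, HasDerivWithinAt (ξ ε) (v ε t) (Icc 0 T) t)
    (hv : ∀ ε > 0, IsIntegralCurveOn (v ε) (fun t w ↦ ε⁻¹ • (-E t (ξ ε t) - w)) (Icc 0 T))
    (hξ0 : Tendsto (fun ε ↦ ξ ε 0) (𝓝[>] 0) (𝓝 (x 0))) (hv0 : ∀ ε > 0, ‖v ε 0‖ ≤ C) :
    TendstoUniformlyOn ξ x (𝓝[>] 0) (Icc 0 T) := by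
  obtain ⟨M, hM⟩ := isCompact_Icc.exists_bound_of_continuousOn
    (continuousOn_of_lipschitzWith_of_continuousOn hE hE_cont hx.continuousOn)
  have hid : Tendsto (fun ε : ℝ ↦ ε) (𝓝[>] 0) (𝓝 0) := tendsto_id.mono_left nhdsWithin_le_nhds
  have hrate : Tendsto (fun ε ↦ 2 * (‖ξ ε 0 - x 0‖ + ε * C + ε * M) * Real.exp (2 * L * T))
      (𝓝[>] 0) (𝓝 0) := by
    simpa using ((((tendsto_iff_norm_sub_tendsto_zero.1 hξ0).add (hid.mul_const C)).add
      (hid.mul_const M)).const_mul 2).mul_const (Real.exp (2 * L * T))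
  rw [Metric.tendstoUniformlyOn_iff]
  intro η hη
  filter_upwards [hrate.eventually_lt_const hη, self_mem_nhdsWithin] with ε hεη (hε : 0 < ε) t ht
  have hM0 : 0 ≤ M := (norm_nonneg _).trans (hM t ht)
  have hC0 : 0 ≤ C := (norm_nonneg _).trans (hv0 ε hε)
  rw [dist_comm, dist_eq_norm]
  calc ‖ξ ε t - x t‖
      ≤ 2 * (‖ξ ε 0 - x 0‖ + ε * ‖v ε 0‖ + ε * M) * Real.exp (2 * L * t) :=
        norm_sub_le_of_zero_inertia hε hE hx hM (hξ ε hε) (hv ε hε) t ht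
    _ ≤ 2 * (‖ξ ε 0 - x 0‖ + ε * C + ε * M) * Real.exp (2 * L * T) := by
        gcongr
        exacts [hv0 ε hε, ht.2]
    _ < η := hεη

theorem zero_inertia_limit_relaxation_general {C : ℝ} {ξ v : ℝ → ℝ → V}
    (hE : ∀ t ∈ Icc 0 T, LipschitzWith L (E t))
    (hE_cont : ∀ y, ContinuousOn (fun t ↦ E t y) (Icc 0 T))
    (hx : ∀ t ∈ Icc 0 T, HasDerivWithinAt x (-E t (x t)) (Icc 0 T) t)
    (hξ : ∀ ε > 0, ∀ t ∈ Icc 0 T, HasDerivWithinAt (ξ ε) (v ε t) (Icc 0 T) t)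
    (hv : ∀ ε > 0, ∀ t ∈ Icc 0 T,
      HasDerivWithinAt (v ε) (ε⁻¹ • (-(v ε t) - E t (ξ ε t))) (Icc 0 T) t)
    (hξ0 : Tendsto (fun ε ↦ ξ ε 0) (𝓝[>] 0) (𝓝 (x 0))) (hv0 : ∀ ε > 0, ‖v ε 0‖ ≤ C) :
    TendstoUniformlyOn ξ x (𝓝[>] 0) (Icc 0 T) ∧
      ∀ δ > 0, TendstoUniformlyOn v (fun t ↦ -E t (x t)) (𝓝[>] 0) (Icc δ T) := by
  have hx_curve : IsIntegralCurveOn x (fun t y ↦ -E t y) (Icc 0 T) := hx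
  have hv_relax : ∀ ε > 0, IsIntegralCurveOn (v ε) (fun t w ↦ ε⁻¹ • (-E t (ξ ε t) - w)) (Icc 0 T) :=
    fun ε hε t ht ↦ (hv ε hε t ht).congr_deriv (by rw [neg_sub_comm])
  have hξx := tendstoUniformlyOn_of_zero_inertia hE hE_cont hx_curve hξ hv_relax hξ0 hv0
  have hEξ := tendstoUniformlyOn_of_lipschitzWith_of_tendstoUniformlyOn hE hξx
  have hEx := continuousOn_of_lipschitzWith_of_continuousOn hE hE_cont hx_curve.continuousOn
  exact ⟨hξx, fun δ hδ ↦ tendstoUniformlyOn_of_relaxation hv_relax hv0 hEξ.neg hEx.neg hδ⟩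

end ZeroInertia

/-- **Zero-inertia (Tikhonov) limit for the relaxation system.**
Let `E : [0,T] × ℝ^d → ℝ^d` be bounded and (jointly) Lipschitz. Let `x` solve
`dx/dt = -E(t,x)`, `x 0 = x₀`, and for each `ε > 0` let `(xε ε, vε ε)` solve
`dx/dt = v`, `ε dv/dt = -v - E(t,x)` with initial data `(x₀, v₀)`. Then as
`ε → 0⁺`, `xε ε → x` uniformly on `[0,T]` and `vε ε t → -E(t, x t)` for every
`t ∈ (0,T]`. -/
theorem zero_inertia_limit_relaxation
    (d : ℕ) (T : ℝ) (hT : 0 < T)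
    (Efield : ℝ → EuclideanSpace ℝ (Fin d) → EuclideanSpace ℝ (Fin d))
    (M : ℝ) (L : NNReal)
    (hbound : ∀ t xx, ‖Efield t xx‖ ≤ M)
    (hlip : LipschitzWith L (fun p : ℝ × EuclideanSpace ℝ (Fin d) => Efield p.1 p.2))
    (x₀ v₀ : EuclideanSpace ℝ (Fin d))
    (x : ℝ → EuclideanSpace ℝ (Fin d))
    (hx0 : x 0 = x₀)
    (hx : ∀ t ∈ Icc (0:ℝ) T, HasDerivAt x (-Efield t (x t)) t)
    (xε vε : ℝ → ℝ → EuclideanSpace ℝ (Fin d))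
    (hxε0 : ∀ ε > (0:ℝ), xε ε 0 = x₀)
    (hvε0 : ∀ ε > (0:ℝ), vε ε 0 = v₀)
    (hxε : ∀ ε > (0:ℝ), ∀ t ∈ Icc (0:ℝ) T, HasDerivAt (xε ε) (vε ε t) t)
    (hvε : ∀ ε > (0:ℝ), ∀ t ∈ Icc (0:ℝ) T,
      HasDerivAt (vε ε) (ε⁻¹ • (-(vε ε t) - Efield t (xε ε t))) t) :
    TendstoUniformlyOn (fun ε t => xε ε t) x (𝓝[>] (0:ℝ)) (Icc 0 T) ∧
    ∀ t ∈ Ioc (0:ℝ) T,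
      Tendsto (fun ε => vε ε t) (𝓝[>] (0:ℝ)) (𝓝 (-Efield t (x t))) := by
  have hE : ∀ t, LipschitzWith L (Efield t) := fun t ↦
    LipschitzWith.of_dist_le_mul fun y z ↦ by simpa using hlip.dist_le_mul (t, y) (t, z)
  have hE_cont : ∀ y, Continuous fun t ↦ Efield t y := fun y ↦
    hlip.continuous.comp (continuous_id.prodMk continuous_const)
  have hx_init : Tendsto (fun ε ↦ xε ε 0) (𝓝[>] 0) (𝓝 (x 0)) :=
    tendsto_const_nhds.congr' (by
      filter_upwards [self_mem_nhdsWithin] with ε hε using hx0.trans (hxε0 ε hε).symm)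
  obtain ⟨hx_unif, hv_unif⟩ := zero_inertia_limit_relaxation_general (E := Efield) (C := ‖v₀‖)
    (fun t _ ↦ hE t) (fun y ↦ (hE_cont y).continuousOn) (fun t ht ↦ (hx t ht).hasDerivWithinAt)
    (fun ε hε t ht ↦ (hxε ε hε t ht).hasDerivWithinAt)
    (fun ε hε t ht ↦ (hvε ε hε t ht).hasDerivWithinAt) hx_init
    (fun ε hε ↦ (congrArg norm (hvε0 ε hε)).le)
  exact ⟨hx_unif, fun t ht ↦ (hv_unif t ht.1).tendsto_at (left_mem_Icc.2 ht.2)⟩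
end

section
/- Assume ∇K ∈ W^{1,∞}(ℝ^d) and let f₀ be a Borel probability measure on ℝ^d × ℝ^d supported in the ball B_{R₀} of ℝ^{2d}. Let T > 0, ε > 0, and let f : [0,T] → P(ℝ^d × ℝ^d) be a measure solution of the kinetic aggregation equation with inertia parameter ε and initial datum f₀. Then, with V = max(R₀, ‖∇K‖_{L^∞}), the support of f(t) is contained in the ball of radius R(T) = R₀ + V(1 + T) in ℝ^{2d} for all t ∈ [0,T]; in particular the support bound depends only on R₀, ‖∇K‖_{L^∞} and T, and not on ε. -/
open Set Filter Topology MeasureTheory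

/-- The interaction field `(∇K ∗ μ)(x) = ∫ ∇K(x - y) dμ(y)` generated by a
measure `μ` on `ℝ^d` (here `gradK` plays the role of `∇K`). -/
noncomputable def interactionField {d : ℕ}
    (gradK : EuclideanSpace ℝ (Fin d) → EuclideanSpace ℝ (Fin d))
    (μ : Measure (EuclideanSpace ℝ (Fin d))) (x : EuclideanSpace ℝ (Fin d)) :
    EuclideanSpace ℝ (Fin d) :=
  ∫ y, gradK (x - y) ∂μ

/-- `f : [0,T] → P(ℝ^d × ℝ^d)` is a measure solution of the kinetic aggregation
equation `∂ₜ f + v·∇ₓ f = (1/ε) ∇_v·((v + ∇K ∗ ρ) f)` with inertia parameter `ε`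
and initial datum `f₀`, in the mass-transportation sense: `f t` is the
push-forward of `f₀` under the flow map `Φ t` of the characteristic system
`dx/dt = v`, `ε dv/dt = -v - (∇K ∗ ρ)(t,x)`, where `ρ t` is the first marginal
of `f t`. -/
def IsKineticMeasureSolution {d : ℕ}
    (gradK : EuclideanSpace ℝ (Fin d) → EuclideanSpace ℝ (Fin d)) (ε T : ℝ)
    (f₀ : Measure (EuclideanSpace ℝ (Fin d) × EuclideanSpace ℝ (Fin d)))
    (f : ℝ → Measure (EuclideanSpace ℝ (Fin d) × EuclideanSpace ℝ (Fin d))) : Prop :=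
  ∃ Φ : ℝ → (EuclideanSpace ℝ (Fin d) × EuclideanSpace ℝ (Fin d)) →
        (EuclideanSpace ℝ (Fin d) × EuclideanSpace ℝ (Fin d)),
    (∀ t, Measurable (Φ t)) ∧
    (∀ p, Φ 0 p = p) ∧
    (∀ p, ∀ t ∈ Icc (0:ℝ) T,
      HasDerivAt (fun s => (Φ s p).1) ((Φ t p).2) t ∧
      HasDerivAt (fun s => (Φ s p).2)
        (ε⁻¹ • (-(Φ t p).2 -
          interactionField gradK ((f t).map Prod.fst) (Φ t p).1)) t) ∧
    (∀ t ∈ Icc (0:ℝ) T, f t = f₀.map (Φ t))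

/-! Multiplying `ε v' = -v - F` by the integrating factor `exp (t / ε)` gives
`‖(exp (t / ε) • v)'‖ ≤ (exp (t / ε) * V)'` as soon as `‖F‖ ≤ V`, so the velocity ball of radius `V`
is invariant whatever `ε` is. Positions then move with speed at most `V`, and the support bound
passes to the push-forward. -/

section Characteristics

variable {E : Type*} [NormedAddCommGroup E] [NormedSpace ℝ E]

theorem hasDerivWithinAt_exp_smul_of_damped {v : ℝ → E} {c t : ℝ} {g : E} {s : Set ℝ}
    (hv : HasDerivWithinAt v (c • (-v t - g)) s t) :
    HasDerivWithinAt (fun r => Real.exp (c * r) • v r) (-((Real.exp (c * t) * c) • g)) s t :=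
  ((hasDerivAt_const_mul c).exp.hasDerivWithinAt.smul hv).congr_deriv (by module)

theorem norm_le_of_damped {v g : ℝ → E} {a b c V : ℝ} (hc : 0 ≤ c)
    (hcont : ContinuousOn v (Icc a b))
    (hv : ∀ t ∈ Ico a b, HasDerivWithinAt v (c • (-v t - g t)) (Ici t) t)
    (hg : ∀ t ∈ Ico a b, ‖g t‖ ≤ V) (ha : ‖v a‖ ≤ V) :
    ∀ t ∈ Icc a b, ‖v t‖ ≤ V := by
  intro t ht
  have norm_exp_smul (r : ℝ) (w : E) : ‖Real.exp (c * r) • w‖ = Real.exp (c * r) * ‖w‖ := by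
    rw [norm_smul, Real.norm_of_nonneg (Real.exp_nonneg _)]
  have weighted_le : ‖Real.exp (c * t) • v t‖ ≤ Real.exp (c * t) * V := by
    refine image_norm_le_of_norm_deriv_right_le_deriv_boundary
      (f := fun r => Real.exp (c * r) • v r) (B := fun r => Real.exp (c * r) * V)
      (by fun_prop) (fun r hr => hasDerivWithinAt_exp_smul_of_damped (hv r hr)) ?initial
      (fun r => (hasDerivAt_const_mul c).exp.mul_const V) (fun r hr => ?deriv) ht
    case initial =>
      rw [norm_exp_smul]
      gcongr
    case deriv =>
      rw [norm_neg, norm_smul, Real.norm_of_nonneg (by positivity)]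
      gcongr
      exact hg r hr
  rw [norm_exp_smul] at weighted_le
  exact le_of_mul_le_mul_left weighted_le (Real.exp_pos _)

/-- `t ↦ (x t, v t)` is a characteristic on `[0, T]` of the damped system `x' = v`,
`ε v' = -v - F(t, x)` with inertia parameter `ε` and a prescribed force field `F`. The second
equation is divided by `ε`, so it has this meaning only for `ε ≠ 0`; derivatives at the endpoints
are one-sided. -/
structure IsDampedCharacteristic (ε T : ℝ) (F : ℝ → E → E) (x v : ℝ → E) : Prop where
  hasDerivWithinAt_position : ∀ t ∈ Icc 0 T, HasDerivWithinAt x (v t) (Icc 0 T) t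
  hasDerivWithinAt_velocity :
    ∀ t ∈ Icc 0 T, HasDerivWithinAt v (ε⁻¹ • (-v t - F t (x t))) (Icc 0 T) t

namespace IsDampedCharacteristic

variable {ε T : ℝ} {F : ℝ → E → E} {x v : ℝ → E}

theorem norm_velocity_le {V : ℝ} (h : IsDampedCharacteristic ε T F x v) (hε : 0 < ε)
    (hF : ∀ t ∈ Icc 0 T, ‖F t (x t)‖ ≤ V) (hv₀ : ‖v 0‖ ≤ V) :
    ∀ t ∈ Icc 0 T, ‖v t‖ ≤ V := by
  refine norm_le_of_damped (c := ε⁻¹) (g := fun t => F t (x t)) (by positivity)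
    (fun t ht => (h.hasDerivWithinAt_velocity t ht).continuousWithinAt)
    (fun t ht => ?_) (fun t ht => hF t (Ico_subset_Icc_self ht)) hv₀
  exact (h.hasDerivWithinAt_velocity t (Ico_subset_Icc_self ht)).mono_of_mem_nhdsWithin
    (Icc_mem_nhdsGE_of_mem ht)

theorem norm_position_le {V : ℝ} (h : IsDampedCharacteristic ε T F x v)
    (hv : ∀ t ∈ Icc 0 T, ‖v t‖ ≤ V) :
    ∀ t ∈ Icc 0 T, ‖x t‖ ≤ ‖x 0‖ + V * t := by
  intro t ht
  have displacement_le : ‖x t - x 0‖ ≤ V * (t - 0) :=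
    norm_image_sub_le_of_norm_deriv_le_segment' h.hasDerivWithinAt_position
      (fun s hs => hv s (Ico_subset_Icc_self hs)) t ht
  rw [sub_zero] at displacement_le
  linarith [norm_le_norm_add_norm_sub' (x t) (x 0)]

theorem norm_sq_add_norm_sq_le {M R₀ : ℝ} (h : IsDampedCharacteristic ε T F x v) (hε : 0 < ε)
    (hF : ∀ t ∈ Icc 0 T, ‖F t (x t)‖ ≤ M) (hR₀ : 0 ≤ R₀)
    (h₀ : ‖x 0‖ ^ 2 + ‖v 0‖ ^ 2 ≤ R₀ ^ 2) {t : ℝ} (ht : t ∈ Icc 0 T) :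
    ‖x t‖ ^ 2 + ‖v t‖ ^ 2 ≤ (R₀ + max R₀ M * (1 + T)) ^ 2 := by
  have hx₀ : ‖x 0‖ ≤ R₀ := le_of_sq_le_sq (by linarith [sq_nonneg ‖v 0‖]) hR₀
  have hv₀ : ‖v 0‖ ≤ R₀ := le_of_sq_le_sq (by linarith [sq_nonneg ‖x 0‖]) hR₀
  have velocity_le : ∀ s ∈ Icc 0 T, ‖v s‖ ≤ max R₀ M :=
    h.norm_velocity_le hε (fun s hs => le_max_of_le_right (hF s hs)) (le_max_of_le_left hv₀)
  calc ‖x t‖ ^ 2 + ‖v t‖ ^ 2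
      ≤ (‖x t‖ + ‖v t‖) ^ 2 := pow_add_pow_le (norm_nonneg _) (norm_nonneg _) two_ne_zero
    _ ≤ ((‖x 0‖ + max R₀ M * t) + max R₀ M) ^ 2 := by
        gcongr
        · exact h.norm_position_le velocity_le t ht
        · exact velocity_le t ht
    _ ≤ ((R₀ + max R₀ M * T) + max R₀ M) ^ 2 := by
        have := ht.1
        gcongr
        exact ht.2
    _ = (R₀ + max R₀ M * (1 + T)) ^ 2 := by ring

end IsDampedCharacteristic

theorem measure_solution_uniform_support_general [MeasurableSpace E] [OpensMeasurableSpace E]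
    {ε T M R₀ : ℝ} (hε : 0 < ε) (hR₀ : 0 ≤ R₀) {F : ℝ → E → E}
    (hF : ∀ t ∈ Icc 0 T, ∀ x, ‖F t x‖ ≤ M) {μ : Measure (E × E)}
    (hsupp : μ {p | R₀ ^ 2 < ‖p.1‖ ^ 2 + ‖p.2‖ ^ 2} = 0) {Φ : ℝ → E × E → E × E}
    (hΦ₀ : ∀ p, Φ 0 p = p)
    (hΦ : ∀ p, IsDampedCharacteristic ε T F (fun t => (Φ t p).1) (fun t => (Φ t p).2))
    {t : ℝ} (ht : t ∈ Icc 0 T) (hmeas : AEMeasurable (Φ t) μ) :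
    μ.map (Φ t) {p | (R₀ + max R₀ M * (1 + T)) ^ 2 < ‖p.1‖ ^ 2 + ‖p.2‖ ^ 2} = 0 := by
  rw [Measure.map_apply_of_aemeasurable hmeas (measurableSet_lt measurable_const (by fun_prop))]
  refine measure_mono_null (fun p hp => ?_) hsupp
  contrapose! hp
  simp only [mem_preimage, mem_ofPred_eq, not_lt] at hp ⊢
  exact (hΦ p).norm_sq_add_norm_sq_le hε (fun s hs => hF s hs _) hR₀
    (by simpa only [hΦ₀] using hp) ht

end Characteristics

section KineticMeasureSolution

variable {d : ℕ} {gradK : EuclideanSpace ℝ (Fin d) → EuclideanSpace ℝ (Fin d)}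

theorem norm_interactionField_le {M : ℝ} (hbound : ∀ z, ‖gradK z‖ ≤ M)
    (μ : Measure (EuclideanSpace ℝ (Fin d))) [IsFiniteMeasure μ] (x : EuclideanSpace ℝ (Fin d)) :
    ‖interactionField gradK μ x‖ ≤ M * μ.real univ :=
  norm_integral_le_of_norm_le_const (.of_forall fun y => hbound (x - y))

namespace IsKineticMeasureSolution

variable {ε T : ℝ}
  {f₀ : Measure (EuclideanSpace ℝ (Fin d) × EuclideanSpace ℝ (Fin d))} [IsProbabilityMeasure f₀]
  {f : ℝ → Measure (EuclideanSpace ℝ (Fin d) × EuclideanSpace ℝ (Fin d))}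

theorem isProbabilityMeasure (hf : IsKineticMeasureSolution gradK ε T f₀ f) {t : ℝ}
    (ht : t ∈ Icc 0 T) : IsProbabilityMeasure (f t) := by
  obtain ⟨Φ, hmeas, -, -, hpush⟩ := hf
  rw [hpush t ht]
  exact Measure.isProbabilityMeasure_map (hmeas t).aemeasurable

theorem norm_interactionField_le {M : ℝ} (hf : IsKineticMeasureSolution gradK ε T f₀ f)
    (hbound : ∀ z, ‖gradK z‖ ≤ M) :
    ∀ t ∈ Icc 0 T, ∀ x, ‖interactionField gradK ((f t).map Prod.fst) x‖ ≤ M := by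
  intro t ht x
  have := hf.isProbabilityMeasure ht
  have : IsProbabilityMeasure ((f t).map Prod.fst) :=
    Measure.isProbabilityMeasure_map measurable_fst.aemeasurable
  simpa using _root_.norm_interactionField_le hbound ((f t).map Prod.fst) x

end IsKineticMeasureSolution

end KineticMeasureSolution

/-- **Uniform-in-ε bound on the support of measure solutions.**
If `∇K` is bounded (by `M`) and Lipschitz, and `f₀` is a probability measure
supported in the Euclidean ball of radius `R₀` of `ℝ^{2d}`, then for any measure
solution `f` of the kinetic aggregation equation with inertia parameter `ε`,
the support of `f t` is contained in the ball of radius `R₀ + V(1+T)` with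
`V = max R₀ M`, for all `t ∈ [0,T]`; in particular the bound does not depend
on `ε`. -/
theorem measure_solution_uniform_support
    (d : ℕ) (T ε M R₀ : ℝ) (hT : 0 < T) (hε : 0 < ε) (hM : 0 ≤ M) (hR₀ : 0 ≤ R₀)
    (gradK : EuclideanSpace ℝ (Fin d) → EuclideanSpace ℝ (Fin d)) (L : NNReal)
    (hbound : ∀ z, ‖gradK z‖ ≤ M)
    (hlip : LipschitzWith L gradK)
    (f₀ : Measure (EuclideanSpace ℝ (Fin d) × EuclideanSpace ℝ (Fin d)))
    [IsProbabilityMeasure f₀]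
    (hsupp : f₀ {p | R₀ ^ 2 < ‖p.1‖ ^ 2 + ‖p.2‖ ^ 2} = 0)
    (f : ℝ → Measure (EuclideanSpace ℝ (Fin d) × EuclideanSpace ℝ (Fin d)))
    (hf : IsKineticMeasureSolution gradK ε T f₀ f) :
    ∀ t ∈ Icc (0:ℝ) T,
      f t {p | (R₀ + max R₀ M * (1 + T)) ^ 2 < ‖p.1‖ ^ 2 + ‖p.2‖ ^ 2} = 0 := by
  intro t ht
  have field_le := hf.norm_interactionField_le hbound
  obtain ⟨Φ, hmeas, hΦ₀, hode, hpush⟩ := hf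
  rw [hpush t ht]
  exact measure_solution_uniform_support_general hε hR₀ field_le hsupp hΦ₀
    (fun p => ⟨fun s hs => (hode p s hs).1.hasDerivWithinAt,
      fun s hs => (hode p s hs).2.hasDerivWithinAt⟩) ht (hmeas t).aemeasurable
end

section
/- Suppose f₀ ∈ C²(ℝ^d × ℝ^d) ∩ L¹(ℝ^d × ℝ^d) and ∇K ∈ W^{1,∞}(ℝ^d), and let T > 0 and ε > 0. Then there exists a continuously differentiable function f : [0,T] × ℝ^d × ℝ^d → ℝ with f(t,·,·) ∈ L¹(ℝ^d × ℝ^d) for each t, such that f(0,x,v) = f₀(x,v) and f satisfies pointwise the kinetic equation ∂_t f + v·∇_x f = (1/ε) ∇_v·((v + (∇K ∗ ρ)(t,x)) f), where ρ(t,x) = ∫_{ℝ^d} f(t,x,v) dv and (∇K ∗ ρ)(t,x) = ∫_{ℝ^d} ∇K(x − y) ρ(t,y) dy. -/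
open Set Filter Topology MeasureTheory

/-!
In the variables `z = (x + ε v, exp (t / ε) v)` a particle only moves under the force
`F = ∇K ∗ ρ`, and the equation of motion becomes `z' = w t (F (t, ℓ t z))` for linear maps `ℓ t`
(the position) and `w t` with `ℓ t ∘ w t = 0`. Parametrizing the particles by their initial data,
`F` is an average of `∇K` over the unknown flow, so Picard iteration for the whole flow at once,
in a weighted sup norm, produces the self-consistent flow. Each explicit Euler step is a shear,
because `ℓ t ∘ w t = 0`, so the flow preserves volume. Although `∇K` is merely Lipschitz, `F` is
`C¹` in `x`: by Rademacher's theorem its derivative is an average of `D(∇K)`, and a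
volume-preserving substitution shifts the dependence on `(t, x)` onto the integrable initial
density, where it is continuous. Hence the inverse flow is `C¹`, and composing the initial density
with it and multiplying by `exp (d t / ε)` gives the solution.
-/

namespace KineticAggregation

section NonlocalPicard

/-- The Bielecki weight `exp |∫₀ᵗ k|`, which turns the Picard map of a right-hand side with
time-dependent Lipschitz constants controlled by `k` into a contraction on the whole time axis. -/
noncomputable def bieleckiWeight (k : ℝ → ℝ) (t : ℝ) : ℝ :=
  Real.exp |∫ s in (0:ℝ)..t, k s|

lemma bieleckiWeight_pos (k : ℝ → ℝ) (t : ℝ) : 0 < bieleckiWeight k t :=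
  Real.exp_pos _

lemma one_le_bieleckiWeight (k : ℝ → ℝ) (t : ℝ) : 1 ≤ bieleckiWeight k t :=
  Real.one_le_exp (abs_nonneg _)

lemma bieleckiWeight_comp_neg (k : ℝ → ℝ) (t : ℝ) :
    bieleckiWeight (fun s => k (-s)) t = bieleckiWeight k (-t) := by
  rw [bieleckiWeight, bieleckiWeight, intervalIntegral.integral_comp_neg, neg_zero,
    intervalIntegral.integral_symm, abs_neg]

@[fun_prop]
lemma continuous_bieleckiWeight {k : ℝ → ℝ} (hk : Continuous k) :
    Continuous (bieleckiWeight k) :=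
  (intervalIntegral.continuous_primitive (fun _ _ => hk.intervalIntegrable _ _) 0).abs.rexp

variable {P B : Type*} [TopologicalSpace P] [NormedAddCommGroup B] [NormedSpace ℝ B]

lemma integral_mul_exp_integral {k : ℝ → ℝ} (hk : Continuous k) (t : ℝ) :
    ∫ s in (0:ℝ)..t, k s * Real.exp (∫ r in (0:ℝ)..s, k r) =
      Real.exp (∫ s in (0:ℝ)..t, k s) - 1 := by
  have hderiv (s : ℝ) : HasDerivAt (fun s => Real.exp (∫ r in (0:ℝ)..s, k r))
      (k s * Real.exp (∫ r in (0:ℝ)..s, k r)) s :=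
    ((hk.integral_hasStrictDerivAt 0 s).hasDerivAt.exp).congr_deriv (mul_comm _ _)
  have hcont : Continuous fun s => Real.exp (∫ r in (0:ℝ)..s, k r) :=
    continuous_iff_continuousAt.2 fun s => (hderiv s).continuousAt
  rw [intervalIntegral.integral_eq_sub_of_hasDerivAt (fun s _ => hderiv s)
    ((hk.mul hcont).intervalIntegrable _ _)]
  simp

lemma norm_integral_le_bieleckiWeight_of_nonneg {k : ℝ → ℝ} (hk : Continuous k)
    (hk₀ : ∀ s, 0 ≤ k s) {g : ℝ → B} {C : ℝ} (hC : 0 ≤ C)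
    (hg : ∀ s, ‖g s‖ ≤ C * (k s * bieleckiWeight k s)) {t : ℝ} (ht : 0 ≤ t) :
    ‖∫ s in (0:ℝ)..t, g s‖ ≤ C * bieleckiWeight k t := by
  have hweight {s : ℝ} (hs : 0 ≤ s) :
      bieleckiWeight k s = Real.exp (∫ r in (0:ℝ)..s, k r) := by
    rw [bieleckiWeight, abs_of_nonneg (intervalIntegral.integral_nonneg hs fun r _ => hk₀ r)]
  calc ‖∫ s in (0:ℝ)..t, g s‖ ≤ ∫ s in (0:ℝ)..t, C * (k s * bieleckiWeight k s) :=
        intervalIntegral.norm_integral_le_of_norm_le ht (Eventually.of_forall fun s _ => hg s)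
          (Continuous.intervalIntegrable (by fun_prop) _ _)
    _ = C * ∫ s in (0:ℝ)..t, k s * Real.exp (∫ r in (0:ℝ)..s, k r) := by
        rw [intervalIntegral.integral_const_mul]
        congr 1
        refine intervalIntegral.integral_congr fun s hs => ?_
        rw [uIcc_of_le ht] at hs
        simp only [hweight hs.1]
    _ = C * (bieleckiWeight k t - 1) := by rw [integral_mul_exp_integral hk, hweight ht]
    _ ≤ C * bieleckiWeight k t := by gcongr; linarith

lemma norm_integral_le_bieleckiWeight {k : ℝ → ℝ} (hk : Continuous k) (hk₀ : ∀ s, 0 ≤ k s)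
    {g : ℝ → B} {C : ℝ} (hC : 0 ≤ C) (hg : ∀ s, ‖g s‖ ≤ C * (k s * bieleckiWeight k s)) (t : ℝ) :
    ‖∫ s in (0:ℝ)..t, g s‖ ≤ C * bieleckiWeight k t := by
  rcases le_total 0 t with ht | ht
  · exact norm_integral_le_bieleckiWeight_of_nonneg hk hk₀ hC hg ht
  · have h := norm_integral_le_bieleckiWeight_of_nonneg (k := fun s => k (-s)) (by fun_prop)
      (fun s => hk₀ (-s)) hC (fun s => by rw [bieleckiWeight_comp_neg]; exact hg (-s))
      (neg_nonneg.2 ht)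
    rwa [intervalIntegral.integral_comp_neg, neg_neg, neg_zero, intervalIntegral.integral_symm,
      norm_neg, bieleckiWeight_comp_neg, neg_neg] at h

open scoped BoundedContinuousFunction

lemma exists_bieleckiWeight_smul_eq_integral [FirstCountableTopology P] {k : ℝ → ℝ}
    (hk : Continuous k) (hk₀ : ∀ s, 0 ≤ k s) {g : ℝ × P → B} (hg : Continuous g) {C : ℝ}
    (hC : 0 ≤ C) (hgC : ∀ s p, ‖g (s, p)‖ ≤ C * (k s * bieleckiWeight k s)) :
    ∃ v : ℝ × P →ᵇ B, ∀ q, bieleckiWeight k q.1 • v q = ∫ s in (0:ℝ)..q.1, g (s, q.2) := by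
  have hcont : Continuous fun q : ℝ × P => ∫ s in (0:ℝ)..q.1, g (s, q.2) :=
    intervalIntegral.continuous_parametric_intervalIntegral_of_continuous
      (f := fun (q : ℝ × P) s => g (s, q.2)) (by fun_prop) continuous_fst
  refine ⟨BoundedContinuousFunction.ofNormedAddCommGroup
    (fun q => (bieleckiWeight k q.1)⁻¹ • ∫ s in (0:ℝ)..q.1, g (s, q.2))
    (Continuous.smul (Continuous.inv₀ (by fun_prop) fun q => (bieleckiWeight_pos k q.1).ne')
      hcont) C fun q => ?_, fun q => smul_inv_smul₀ (bieleckiWeight_pos k q.1).ne' _⟩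
  rw [norm_smul, norm_inv, Real.norm_of_nonneg (bieleckiWeight_pos k q.1).le,
    inv_mul_le_iff₀ (bieleckiWeight_pos k q.1), mul_comm]
  exact norm_integral_le_bieleckiWeight hk hk₀ hC (fun s => hgC s q.2) q.1

variable [FirstCountableTopology P] [CompleteSpace B]

lemma exists_bieleckiWeight_smul_eq_integral_self {k : ℝ → ℝ} (hk : Continuous k)
    (hk₀ : ∀ s, 0 ≤ k s) {N : (ℝ × P →ᵇ B) → ℝ × P → B} (hN : ∀ u, Continuous (N u))
    (hN₀ : ∀ s p, ‖N 0 (s, p)‖ ≤ k s)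
    (hNsub : ∀ u u' s p,
      ‖N u (s, p) - N u' (s, p)‖ ≤ ‖u - u'‖ / 2 * (k s * bieleckiWeight k s)) :
    ∃ u : ℝ × P →ᵇ B, ∀ q, bieleckiWeight k q.1 • u q = ∫ s in (0:ℝ)..q.1, N u (s, q.2) := by
  have hNbound (u : ℝ × P →ᵇ B) (s : ℝ) (p : P) :
      ‖N u (s, p)‖ ≤ (1 + ‖u‖ / 2) * (k s * bieleckiWeight k s) := by
    have hsub := hNsub u 0 s p
    rw [sub_zero] at hsub
    linarith [norm_le_norm_add_norm_sub' (N u (s, p)) (N 0 (s, p)), hN₀ s p,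
      le_mul_of_one_le_right (hk₀ s) (one_le_bieleckiWeight k s)]
  choose G hG using fun u => exists_bieleckiWeight_smul_eq_integral hk hk₀ (hN u)
    (by positivity) (hNbound u)
  have hint (u : ℝ × P →ᵇ B) (p : P) (t : ℝ) :
      IntervalIntegrable (fun s => N u (s, p)) volume 0 t :=
    Continuous.intervalIntegrable ((hN u).comp (by fun_prop)) _ _
  have hGcontract : ContractingWith (1 / 2) G := by
    refine ⟨by norm_num, LipschitzWith.of_dist_le_mul fun u u' => ?_⟩
    refine (BoundedContinuousFunction.dist_le (by positivity)).2 fun q => ?_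
    have hW := bieleckiWeight_pos k q.1
    have hle := norm_integral_le_bieleckiWeight hk hk₀ (by positivity)
      (fun s => hNsub u u' s q.2) q.1
    rw [intervalIntegral.integral_sub (hint u _ _) (hint u' _ _), ← hG, ← hG, ← smul_sub,
      norm_smul, Real.norm_of_nonneg hW.le, mul_comm, mul_le_mul_iff_left₀ hW] at hle
    rw [dist_eq_norm, dist_eq_norm]
    refine hle.trans_eq ?_
    push_cast
    ring
  obtain ⟨u, hu, -⟩ := hGcontract.exists_fixedPoint 0 (edist_ne_top _ _)
  exact ⟨u, fun q => by rw [← hG u q, hu.eq]⟩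

variable {y₀ : P → B} {H : (ℝ × P → B) → ℝ × P → B} {A K : ℝ → ℝ}

lemma exists_nonlocal_integral_solution (hy₀ : Continuous y₀)
    (hH : ∀ y, Continuous y → Continuous (H y)) (hA : Continuous A) (hK : Continuous K)
    (hHA : ∀ s p, ‖H (fun q => y₀ q.2) (s, p)‖ ≤ A s)
    (hHK : ∀ y y', Continuous y → Continuous y' → ∀ s C, (∀ p, ‖y (s, p) - y' (s, p)‖ ≤ C) →
      ∀ p, ‖H y (s, p) - H y' (s, p)‖ ≤ K s * C) :
    ∃ y : ℝ × P → B, Continuous y ∧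
      (∀ t p, y (t, p) = y₀ p + ∫ s in (0:ℝ)..t, H y (s, p)) ∧
      ∃ R : ℝ → ℝ, Continuous R ∧ ∀ t p, ‖y (t, p) - y₀ p‖ ≤ R t := by
  let k (s : ℝ) : ℝ := |A s| + 2 * |K s|
  have hW (s : ℝ) : 0 < bieleckiWeight k s := bieleckiWeight_pos k s
  have hk : Continuous k := by fun_prop
  let Y (u : ℝ × P →ᵇ B) (q : ℝ × P) : B := y₀ q.2 + bieleckiWeight k q.1 • u q
  have hY (u : ℝ × P →ᵇ B) : Continuous (Y u) := by
    have := u.continuous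
    fun_prop
  have hYsub (u u' : ℝ × P →ᵇ B) (s : ℝ) (p : P) :
      ‖H (Y u) (s, p) - H (Y u') (s, p)‖ ≤ ‖u - u'‖ / 2 * (k s * bieleckiWeight k s) := by
    calc ‖H (Y u) (s, p) - H (Y u') (s, p)‖ ≤ K s * (bieleckiWeight k s * ‖u - u'‖) := by
          refine hHK _ _ (hY u) (hY u') s _ (fun p => ?_) p
          rw [add_sub_add_left_eq_sub, ← smul_sub, norm_smul, Real.norm_of_nonneg (hW s).le]
          exact mul_le_mul_of_nonneg_left ((u - u').norm_coe_le_norm (s, p)) (hW s).le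
      _ ≤ k s / 2 * (bieleckiWeight k s * ‖u - u'‖) := by
          have := (hW s).le
          gcongr
          linarith [le_abs_self (K s), abs_nonneg (A s)]
      _ = ‖u - u'‖ / 2 * (k s * bieleckiWeight k s) := by ring
  have hY₀ (s : ℝ) (p : P) : ‖H (Y 0) (s, p)‖ ≤ k s := by
    have hY0 : Y 0 = fun q => y₀ q.2 := by simp [Y]
    rw [hY0]
    linarith [hHA s p, le_abs_self (A s), abs_nonneg (K s)]
  obtain ⟨u, hu⟩ := exists_bieleckiWeight_smul_eq_integral_self hk (fun s => by positivity)
    (fun u => hH _ (hY u)) hY₀ hYsub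
  refine ⟨Y u, hY u, fun t p => by rw [← hu (t, p)], fun t => bieleckiWeight k t * ‖u‖,
    by fun_prop, fun t p => ?_⟩
  rw [add_sub_cancel_left, norm_smul, Real.norm_of_nonneg (hW t).le]
  exact mul_le_mul_of_nonneg_left (u.norm_coe_le_norm _) (hW t).le

/-- The velocity of `y (·, p)` at time `s` may depend on the whole slice `y (s, ·)`, as it does
for an interacting particle system. -/
theorem exists_hasDerivAt_nonlocal (hy₀ : Continuous y₀)
    (hH : ∀ y, Continuous y → Continuous (H y)) (hA : Continuous A) (hK : Continuous K)
    (hHA : ∀ s p, ‖H (fun q => y₀ q.2) (s, p)‖ ≤ A s)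
    (hHK : ∀ y y', Continuous y → Continuous y' → ∀ s C, (∀ p, ‖y (s, p) - y' (s, p)‖ ≤ C) →
      ∀ p, ‖H y (s, p) - H y' (s, p)‖ ≤ K s * C) :
    ∃ y : ℝ × P → B, Continuous y ∧ (∀ p, y (0, p) = y₀ p) ∧
      (∀ t p, HasDerivAt (fun s => y (s, p)) (H y (t, p)) t) ∧
      ∃ R : ℝ → ℝ, Continuous R ∧ ∀ t p, ‖y (t, p) - y₀ p‖ ≤ R t := by
  obtain ⟨y, hy, hint, hR⟩ := exists_nonlocal_integral_solution hy₀ hH hA hK hHA hHK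
  refine ⟨y, hy, fun p => by simp [hint 0 p], fun t p => ?_, hR⟩
  have hcont : Continuous fun s => H y (s, p) := (hH y hy).comp (by fun_prop)
  simpa only [hint] using
    ((hcont.integral_hasStrictDerivAt 0 t).hasDerivAt).const_add (y₀ p)

end NonlocalPicard

section Flow

variable {Z : Type*} [NormedAddCommGroup Z]

lemma isProperMap_prodMk_of_norm_sub_le [ProperSpace Z] {Φ : ℝ × Z → Z} (hΦ : Continuous Φ)
    {R : ℝ → ℝ} (hR : Continuous R) (hΦR : ∀ t z, ‖Φ (t, z) - z‖ ≤ R t) :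
    IsProperMap fun q : ℝ × Z => (q.1, Φ q) := by
  have hcont : Continuous fun q : ℝ × Z => (q.1, Φ q) := by fun_prop
  refine isProperMap_iff_isCompact_preimage.2 ⟨hcont, fun S hS => ?_⟩
  obtain ⟨C, hC⟩ := hS.exists_bound_of_continuousOn (hR.comp continuous_fst).continuousOn
  have hcompact : IsCompact ((fun a : (ℝ × Z) × Z => (a.1.1, a.1.2 - a.2)) ''
      (S ×ˢ Metric.closedBall (0 : Z) C)) :=
    (hS.prod (isCompact_closedBall _ _)).image (by fun_prop)
  refine hcompact.of_isClosed_subset (hS.isClosed.preimage hcont) fun q hq => ?_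
  refine ⟨((q.1, Φ q), Φ q - q.2), ⟨hq, mem_closedBall_zero_iff.2 ?_⟩, by simp⟩
  exact (hΦR q.1 q.2).trans ((le_abs_self _).trans (hC (q.1, Φ q) hq))

variable [NormedSpace ℝ Z]

lemma eq_of_hasDerivAt {b : ℝ × Z → Z} {K : ℝ → ℝ} (hK : Continuous K)
    (hb : ∀ s z z', ‖b (s, z) - b (s, z')‖ ≤ K s * ‖z - z'‖) {γ γ' : ℝ → Z} {t₀ : ℝ}
    (hγ : ∀ t, HasDerivAt γ (b (t, γ t)) t) (hγ' : ∀ t, HasDerivAt γ' (b (t, γ' t)) t)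
    (h : γ t₀ = γ' t₀) : γ = γ' := by
  funext t
  have hcompact : IsCompact (Icc (min t t₀ - 1) (max t t₀ + 1)) := isCompact_Icc
  obtain ⟨C, hC⟩ := hcompact.exists_bound_of_continuousOn hK.continuousOn
  refine ODE_solution_unique_of_mem_Ioo (v := fun s z => b (s, z)) (s := fun _ => univ)
    (K := C.toNNReal) (fun s hs => ?_)
    (a := min t t₀ - 1) (b := max t t₀ + 1) ?_ (fun s _ => ⟨hγ s, mem_univ _⟩)
    (fun s _ => ⟨hγ' s, mem_univ _⟩) h ?_
  · refine LipschitzOnWith.of_dist_le_mul fun z _ z' _ => ?_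
    rw [dist_eq_norm, dist_eq_norm]
    refine (hb s z z').trans (mul_le_mul_of_nonneg_right ?_ (norm_nonneg _))
    exact (le_abs_self _).trans ((hC s (Ioo_subset_Icc_self hs)).trans (Real.le_coe_toNNReal C))
  · constructor <;> linarith [min_le_right t t₀, le_max_right t t₀]
  · constructor <;> linarith [min_le_left t t₀, le_max_left t t₀]

/-- `Φ t` is the time-`t` map of the non-autonomous equation `z' = b (t, z)` started at time `0`,
bundled as a homeomorphism depending continuously on `t` together with its inverse. -/
structure IsFlow (b : ℝ × Z → Z) (Φ : ℝ → Z ≃ₜ Z) : Prop where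
  map_zero (z : Z) : Φ 0 z = z
  hasDerivAt (t : ℝ) (z : Z) : HasDerivAt (fun s => Φ s z) (b (t, Φ t z)) t
  continuous : Continuous fun q : ℝ × Z => Φ q.1 q.2
  continuous_symm : Continuous fun q : ℝ × Z => (Φ q.1).symm q.2

lemma exists_forall_hasDerivAt [CompleteSpace Z] {b : ℝ × Z → Z} (hb : Continuous b)
    {A K : ℝ → ℝ} (hA : Continuous A) (hK : Continuous K) (hbA : ∀ s z, ‖b (s, z)‖ ≤ A s)
    (hbK : ∀ s z z', ‖b (s, z) - b (s, z')‖ ≤ K s * ‖z - z'‖) (t₀ : ℝ) :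
    ∃ y : ℝ × Z → Z, Continuous y ∧ (∀ z, y (t₀, z) = z) ∧
      (∀ t z, HasDerivAt (fun s => y (s, z)) (b (t, y (t, z))) t) ∧
      ∃ R : ℝ → ℝ, Continuous R ∧ ∀ t z, ‖y (t, z) - z‖ ≤ R t := by
  have hbK' (s C : ℝ) (z z' : Z) (h : ‖z - z'‖ ≤ C) : ‖b (s, z) - b (s, z')‖ ≤ |K s| * C :=
    (hbK s z z').trans (mul_le_mul (le_abs_self _) h (norm_nonneg _) (abs_nonneg _))
  obtain ⟨y, hy, hy₀, hderiv, R, hR, hyR⟩ :=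
    exists_hasDerivAt_nonlocal (y₀ := fun z : Z => z) (A := fun s => A (s + t₀))
      (K := fun s => |K (s + t₀)|) (H := fun y q => b (q.1 + t₀, y q)) continuous_id
      (fun y hy => by fun_prop) (by fun_prop) (by fun_prop) (fun s z => hbA _ _)
      (fun y y' _ _ s C hC z => hbK' _ _ _ _ (hC z))
  refine ⟨fun q => y (q.1 - t₀, q.2), by fun_prop, fun z => by simp [hy₀], fun t z => ?_,
    fun t => R (t - t₀), by fun_prop, fun t z => hyR _ z⟩
  simpa using (hderiv (t - t₀) z).comp_sub_const t t₀

theorem exists_isFlow [ProperSpace Z] {b : ℝ × Z → Z} (hb : Continuous b)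
    {A K : ℝ → ℝ} (hA : Continuous A) (hK : Continuous K) (hbA : ∀ s z, ‖b (s, z)‖ ≤ A s)
    (hbK : ∀ s z z', ‖b (s, z) - b (s, z')‖ ≤ K s * ‖z - z'‖) :
    ∃ Φ : ℝ → Z ≃ₜ Z, IsFlow b Φ := by
  choose Y hYcont hYinit hYderiv R hR hYR using exists_forall_hasDerivAt hb hA hK hbA hbK
  have hunique {t₀ : ℝ} (t₁ t₂ : ℝ) (z z' : Z) (h : Y t₁ (t₀, z) = Y t₂ (t₀, z')) (t : ℝ) :
      Y t₁ (t, z) = Y t₂ (t, z') :=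
    congr_fun (eq_of_hasDerivAt hK hbK (fun t => hYderiv t₁ t z)
      (fun t => hYderiv t₂ t z') h) t
  have hleft (t : ℝ) (z : Z) : Y t (0, Y 0 (t, z)) = z :=
    (hunique (t₀ := t) t 0 _ z (hYinit t _) 0).trans (hYinit 0 z)
  have hright (t : ℝ) (z : Z) : Y 0 (t, Y t (0, z)) = z :=
    (hunique (t₀ := 0) 0 t _ z (hYinit 0 _) t).trans (hYinit t z)
  let e : ℝ × Z ≃ₜ ℝ × Z := Equiv.toHomeomorphOfContinuousClosed
    { toFun := fun q => (q.1, Y 0 q)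
      invFun := fun q => (q.1, Y q.1 (0, q.2))
      left_inv := fun q => Prod.ext rfl (hleft q.1 q.2)
      right_inv := fun q => Prod.ext rfl (hright q.1 q.2) }
    (continuous_fst.prodMk (hYcont 0))
    (isProperMap_prodMk_of_norm_sub_le (hYcont 0) (hR 0) (hYR 0)).isClosedMap
  have hcont : Continuous fun q : ℝ × Z => Y q.1 (0, q.2) := continuous_snd.comp e.symm.continuous
  exact ⟨fun t => {
      toFun := fun z => Y 0 (t, z)
      invFun := fun z => Y t (0, z)
      left_inv := hleft t
      right_inv := hright t
      continuous_toFun := (hYcont 0).comp (by fun_prop)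
      continuous_invFun := hcont.comp (by fun_prop : Continuous fun z : Z => (t, z)) },
    hYinit 0, hYderiv 0, hYcont 0, hcont⟩

end Flow

section Hadamard

variable {S V W : Type*} [NormedAddCommGroup V] [NormedSpace ℝ V] [NormedAddCommGroup W]
  [NormedSpace ℝ W]

lemma hasFDerivAt_of_sub_eq_apply {g : V → W} {N : V → V →L[ℝ] W} {p : V}
    (hN : ContinuousAt N p) (hg : ∀ p', g p' - g p = N p' (p' - p)) :
    HasFDerivAt g (N p) p := by
  refine hasFDerivAt_iff_isLittleO.2 (Asymptotics.isLittleO_iff.2 fun c hc => ?_)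
  filter_upwards [Metric.continuousAt_iff'.1 hN c hc] with p' hp'
  rw [hg, ← sub_apply]
  rw [dist_eq_norm] at hp'
  exact ((N p' - N p).le_opNorm _).trans (mul_le_mul_of_nonneg_right hp'.le (norm_nonneg _))

lemma contDiff_one_of_sub_eq_apply {g : V → W} {N : V × V → V →L[ℝ] W} (hN : Continuous N)
    (hg : ∀ p p', g p' - g p = N (p, p') (p' - p)) : ContDiff ℝ 1 g :=
  contDiff_one_iff_hasFDerivAt.2 ⟨fun p => N (p, p), by fun_prop, fun p =>
    hasFDerivAt_of_sub_eq_apply (N := fun p' => N (p, p')) (by fun_prop) (hg p)⟩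

/-- The average of an operator field over the segment from `x` to `x'`. For a derivative it is
the factor in Hadamard's form `F x' - F x = segmentAverage (fderiv ℝ F) x x' (x' - x)` of the mean
value theorem. -/
noncomputable def segmentAverage (D : V → V →L[ℝ] W) (x x' : V) : V →L[ℝ] W :=
  ∫ r in (0:ℝ)..1, D (x + r • (x' - x))

lemma continuous_segmentAverage [TopologicalSpace S] [FirstCountableTopology S]
    {D : S × V → V →L[ℝ] W} (hD : Continuous D) :
    Continuous fun q : S × V × V => segmentAverage (fun x => D (q.1, x)) q.2.1 q.2.2 :=
  intervalIntegral.continuous_parametric_intervalIntegral_of_continuous'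
    (f := fun (q : S × V × V) r => D (q.1, q.2.1 + r • (q.2.2 - q.2.1))) (by fun_prop) 0 1

lemma norm_segmentAverage_le {D : V → V →L[ℝ] W} {C : ℝ} (hD : ∀ x, ‖D x‖ ≤ C) (x x' : V) :
    ‖segmentAverage D x x'‖ ≤ C := by
  simpa [segmentAverage] using intervalIntegral.norm_integral_le_of_norm_le_const
    (a := (0:ℝ)) (b := 1) fun r _ => hD (x + r • (x' - x))

lemma sub_eq_segmentAverage_apply [CompleteSpace W] {F : V → W} {D : V → V →L[ℝ] W}
    (hD : Continuous D) (hF : ∀ x, HasFDerivAt F (D x) x) (x x' : V) :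
    F x' - F x = segmentAverage D x x' (x' - x) := by
  have hsegment (r : ℝ) : HasDerivAt (fun r : ℝ => F (x + r • (x' - x)))
      (D (x + r • (x' - x)) (x' - x)) r := by
    refine (hF _).comp_hasDerivAt r ?_
    simpa using ((hasDerivAt_id r).smul_const (x' - x)).const_add x
  rw [segmentAverage, ContinuousLinearMap.intervalIntegral_apply
    (Continuous.intervalIntegrable (by fun_prop) _ _),
    intervalIntegral.integral_eq_sub_of_hasDerivAt (fun r _ => hsegment r)
    (Continuous.intervalIntegrable (by fun_prop) _ _)]
  simp

end Hadamard

section FlowRegularity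

variable {Z : Type*} [NormedAddCommGroup Z] [NormedSpace ℝ Z]
  {b : ℝ × Z → Z} {Φ : ℝ → Z ≃ₜ Z} {Db : ℝ × Z → Z →L[ℝ] Z} {K : ℝ → ℝ}

lemma IsFlow.fderiv_symm_apply (hΦ : IsFlow b Φ)
    (hΨ : Differentiable ℝ fun q : ℝ × Z => (Φ q.1).symm q.2) (t : ℝ) (z : Z) :
    fderiv ℝ (fun q : ℝ × Z => (Φ q.1).symm q.2) (t, z) (1, b (t, z)) = 0 := by
  have hcurve := (hasDerivAt_id t).prodMk (hΦ.hasDerivAt t ((Φ t).symm z))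
  have hcomp := (hΨ (t, Φ t ((Φ t).symm z))).hasFDerivAt.comp_hasDerivAt t hcurve
  simp only [Function.comp_def, id_eq, Homeomorph.symm_apply_apply,
    Homeomorph.apply_symm_apply] at hcomp
  exact hcomp.unique (hasDerivAt_const t _)

variable [CompleteSpace Z]

lemma exists_inverse_propagator {P : Type*} [TopologicalSpace P] [FirstCountableTopology P]
    {B : ℝ × P → Z →L[ℝ] Z} (hB : Continuous B) (hK : Continuous K)
    (hBK : ∀ s p, ‖B (s, p)‖ ≤ K s) :
    ∃ k : ℝ × P → Z →L[ℝ] Z, Continuous k ∧ (∀ p, k (0, p) = .id ℝ Z) ∧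
      ∀ t p, HasDerivAt (fun s => k (s, p)) (-(k (t, p) ∘L B (t, p))) t := by
  have hlip (k k' : ℝ × P → Z →L[ℝ] Z) (s C : ℝ) (hC : ∀ p, ‖k (s, p) - k' (s, p)‖ ≤ C) (p : P) :
      ‖-(k (s, p) ∘L B (s, p)) - -(k' (s, p) ∘L B (s, p))‖ ≤ K s * C := by
    rw [neg_sub_neg, norm_sub_rev, ← ContinuousLinearMap.sub_comp, mul_comm]
    exact ((k (s, p) - k' (s, p)).opNorm_comp_le _).trans
      (mul_le_mul (hC p) (hBK s p) (norm_nonneg _) ((norm_nonneg _).trans (hC p)))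
  obtain ⟨k, hk, hk₀, hderiv, -⟩ := exists_hasDerivAt_nonlocal
    (y₀ := fun _ : P => ContinuousLinearMap.id ℝ Z) (A := K) (K := K)
    (H := fun k q => -(k q ∘L B q)) continuous_const (fun k hk => (hk.clm_comp hB).neg) hK hK
    (fun s p => by simpa using hBK s p) (fun k k' _ _ => hlip k k')
  exact ⟨k, hk, hk₀, hderiv⟩

lemma IsFlow.exists_inverse_difference_operator (hΦ : IsFlow b Φ) (hDb : Continuous Db)
    (hbDb : ∀ s z, HasFDerivAt (fun z => b (s, z)) (Db (s, z)) z) (hK : Continuous K)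
    (hDbK : ∀ s z, ‖Db (s, z)‖ ≤ K s) :
    ∃ k : ℝ × Z × Z → Z →L[ℝ] Z, Continuous k ∧
      ∀ t a a', k (t, a, a') (Φ t a' - Φ t a) = a' - a := by
  have hΦcont := hΦ.continuous
  obtain ⟨k, hk, hk₀, hderiv⟩ := exists_inverse_propagator (P := Z × Z)
    (B := fun q => segmentAverage (fun z => Db (q.1, z)) (Φ q.1 q.2.1) (Φ q.1 q.2.2))
    ((continuous_segmentAverage hDb).comp
      (f := fun q : ℝ × Z × Z => (q.1, Φ q.1 q.2.1, Φ q.1 q.2.2)) (by fun_prop))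
    hK (fun s p => norm_segmentAverage_le (hDbK s) _ _)
  refine ⟨k, hk, fun t a a' => ?_⟩
  have hconst (s : ℝ) : HasDerivAt (fun s => k (s, a, a') (Φ s a' - Φ s a)) 0 s := by
    refine ((hderiv s (a, a')).clm_apply
      ((hΦ.hasDerivAt s a').sub (hΦ.hasDerivAt s a))).congr_deriv ?_
    rw [sub_eq_segmentAverage_apply (F := fun z => b (s, z)) (by fun_prop) (hbDb s)]
    simp
  have := is_const_of_deriv_eq_zero (fun s => (hconst s).differentiableAt)
    (fun s => (hconst s).deriv) t 0
  simpa [hk₀, hΦ.map_zero] using this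

theorem IsFlow.contDiff_symm (hΦ : IsFlow b Φ) (hb : Continuous b) (hDb : Continuous Db)
    (hbDb : ∀ s z, HasFDerivAt (fun z => b (s, z)) (Db (s, z)) z) (hK : Continuous K)
    (hDbK : ∀ s z, ‖Db (s, z)‖ ≤ K s) :
    ContDiff ℝ 1 fun q : ℝ × Z => (Φ q.1).symm q.2 := by
  have hΦcont := hΦ.continuous
  have hΨcont := hΦ.continuous_symm
  obtain ⟨k, hk, hkΦ⟩ := hΦ.exists_inverse_difference_operator hDb hbDb hK hDbK
  let velocity (q : Z × ℝ) : ℝ →L[ℝ] Z := .toSpanSingleton ℝ (b (q.2, Φ q.2 q.1))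
  have hvelocity : Continuous velocity :=
    (ContinuousLinearMap.toSpanSingletonCLE (𝕜 := ℝ) (E := Z)).continuous.comp (by fun_prop)
  have hΦsub (a : Z) (t t' : ℝ) :
      Φ t' a - Φ t a = segmentAverage (fun s => velocity (a, s)) t t' (t' - t) :=
    sub_eq_segmentAverage_apply (hvelocity.comp (by fun_prop : Continuous fun s => (a, s)))
      (fun s => (hΦ.hasDerivAt s a).hasFDerivAt) t t'
  have hΨ₁ : Continuous fun q : (ℝ × Z) × (ℝ × Z) => (Φ q.1.1).symm q.1.2 :=
    hΨcont.comp continuous_fst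
  have hΨ₂ : Continuous fun q : (ℝ × Z) × (ℝ × Z) => (Φ q.2.1).symm q.2.2 :=
    hΨcont.comp continuous_snd
  have haverage : Continuous fun q : (ℝ × Z) × (ℝ × Z) =>
      segmentAverage (fun s => velocity ((Φ q.1.1).symm q.1.2, s)) q.1.1 q.2.1 :=
    (continuous_segmentAverage hvelocity).comp
      (f := fun q : (ℝ × Z) × (ℝ × Z) => ((Φ q.1.1).symm q.1.2, q.1.1, q.2.1)) (by fun_prop)
  refine contDiff_one_of_sub_eq_apply (N := fun q =>
    k (q.2.1, (Φ q.1.1).symm q.1.2, (Φ q.2.1).symm q.2.2) ∘L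
      (.snd ℝ ℝ Z - segmentAverage (fun s => velocity ((Φ q.1.1).symm q.1.2, s)) q.1.1 q.2.1 ∘L
        .fst ℝ ℝ Z)) ?_ fun q q' => ?_
  · exact (hk.comp (continuous_snd.fst.prodMk (hΨ₁.prodMk hΨ₂))).clm_comp
      (continuous_const.sub (haverage.clm_comp continuous_const))
  · rw [← hkΦ q'.1]
    simp [← hΦsub]

end FlowRegularity

section Euler

variable {Z : Type*} [NormedAddCommGroup Z]

lemma measurePreserving_of_tendsto [ProperSpace Z] [MeasurableSpace Z] [BorelSpace Z]
    {ν : Measure Z} [ν.Regular] (T : Z ≃ₜ Z) {τ : ℕ → Z → Z}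
    (hτ : ∀ n, MeasurePreserving (τ n) ν ν) {R : ℝ} (hR : ∀ n z, ‖τ n z - z‖ ≤ R)
    (hlim : ∀ z, Tendsto (fun n => τ n z) atTop (𝓝 (T z))) : MeasurePreserving T ν ν := by
  have : (ν.map T).Regular := Measure.Regular.map T
  refine ⟨T.continuous.measurable, Measure.ext_of_integral_eq_on_compactlySupported fun g => ?_⟩
  have hg : Continuous g := g.continuous
  rw [integral_map T.continuous.measurable.aemeasurable hg.aestronglyMeasurable]
  have hinvariant (n : ℕ) : ∫ z, g (τ n z) ∂ν = ∫ z, g z ∂ν := by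
    rw [← integral_map (hτ n).aemeasurable hg.aestronglyMeasurable, (hτ n).map_eq]
  obtain ⟨C, hC⟩ := g.hasCompactSupport.exists_bound_of_continuous hg
  obtain ⟨r, hr⟩ := g.hasCompactSupport.isCompact.isBounded.subset_closedBall 0
  have hzero (n : ℕ) {z : Z} (hz : z ∉ Metric.closedBall (0 : Z) (r + R)) : g (τ n z) = 0 := by
    by_contra hne
    have hτr := mem_closedBall_zero_iff.1 (hr (subset_tsupport g hne))
    exact hz <| mem_closedBall_zero_iff.2 <|
      (norm_le_norm_add_norm_sub (τ n z) z).trans (add_le_add hτr (hR n z))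
  have hconv : Tendsto (fun n => ∫ z, g (τ n z) ∂ν) atTop (𝓝 (∫ z, g (T z) ∂ν)) := by
    refine tendsto_integral_of_dominated_convergence
      ((Metric.closedBall (0 : Z) (r + R)).indicator fun _ => C)
      (fun n => (hg.measurable.comp (hτ n).measurable).aestronglyMeasurable)
      ((integrable_indicator_iff measurableSet_closedBall).2
        (integrableOn_const (isCompact_closedBall _ _).measure_lt_top.ne))
      (fun n => Eventually.of_forall fun z => ?_)
      (Eventually.of_forall fun z => (hg.tendsto _).comp (hlim z))
    by_cases hz : z ∈ Metric.closedBall (0 : Z) (r + R)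
    · rw [indicator_of_mem hz]
      exact hC _
    · rw [indicator_of_notMem hz, hzero n hz, norm_zero]
  simp only [hinvariant] at hconv
  exact tendsto_nhds_unique hconv tendsto_const_nhds

variable [NormedSpace ℝ Z] {b : ℝ × Z → Z}

/-- The map performing `n` steps of size `h` of the explicit Euler scheme for `z' = b (t, z)`,
started at time `0`. -/
def eulerIterate (b : ℝ × Z → Z) (h : ℝ) : ℕ → Z → Z
  | 0, z => z
  | n + 1, z => eulerIterate b h n z + h • b (n * h, eulerIterate b h n z)

lemma measurePreserving_eulerIterate [MeasurableSpace Z] {ν : Measure Z}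
    (hb : ∀ h s : ℝ, MeasurePreserving (fun z : Z => z + h • b (s, z)) ν ν) (h : ℝ) (n : ℕ) :
    MeasurePreserving (eulerIterate b h n) ν ν := by
  induction n with
  | zero => exact MeasurePreserving.id ν
  | succ n ih => exact (hb h (n * h)).comp ih

lemma norm_eulerIterate_sub_le {h A : ℝ} {n : ℕ} (hb : ∀ k < n, ∀ z, ‖b (k * h, z)‖ ≤ A)
    (z : Z) : ‖eulerIterate b h n z - z‖ ≤ n * |h| * A := by
  induction n with
  | zero => simp [eulerIterate]
  | succ n ih =>
    have hstep : ‖h • b (n * h, eulerIterate b h n z)‖ ≤ |h| * A := by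
      rw [norm_smul, Real.norm_eq_abs]
      exact mul_le_mul_of_nonneg_left (hb n n.lt_succ_self _) (abs_nonneg h)
    have hprev := ih fun k hk => hb k (hk.trans n.lt_succ_self)
    rw [eulerIterate, add_sub_right_comm]
    push_cast
    linarith [norm_add_le (eulerIterate b h n z - z) (h • b (n * h, eulerIterate b h n z))]

lemma norm_eulerIterate_sub_curve_le {h K δ : ℝ} (hK₀ : 0 ≤ K) (hδ : 0 ≤ δ) {n : ℕ} {γ : ℝ → Z}
    (hK : ∀ k < n, ∀ z z', ‖b (k * h, z) - b (k * h, z')‖ ≤ K * ‖z - z'‖)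
    (hγ : ∀ k < n, ‖γ ((k + 1 : ℕ) * h) - γ (k * h) - h • b (k * h, γ (k * h))‖ ≤ δ * |h|) :
    ‖eulerIterate b h n (γ 0) - γ (n * h)‖ ≤ n * |h| * δ * Real.exp (n * |h| * K) := by
  induction n with
  | zero => simp [eulerIterate]
  | succ n ih =>
    set e := eulerIterate b h n (γ 0)
    have hprev := ih (fun k hk => hK k (hk.trans n.lt_succ_self))
      (fun k hk => hγ k (hk.trans n.lt_succ_self))
    have hlip : ‖h • (b (n * h, e) - b (n * h, γ (n * h)))‖ ≤ |h| * K * ‖e - γ (n * h)‖ := by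
      rw [norm_smul, Real.norm_eq_abs, mul_assoc]
      exact mul_le_mul_of_nonneg_left (hK n n.lt_succ_self _ _) (abs_nonneg h)
    calc ‖e + h • b (n * h, e) - γ ((n + 1 : ℕ) * h)‖
        = ‖(e - γ (n * h)) + h • (b (n * h, e) - b (n * h, γ (n * h)))
            - (γ ((n + 1 : ℕ) * h) - γ (n * h) - h • b (n * h, γ (n * h)))‖ := by
          congr 1
          module
      _ ≤ (1 + |h| * K) * ‖e - γ (n * h)‖ + δ * |h| := by
          refine (norm_sub_le _ _).trans (add_le_add ?_ (hγ n n.lt_succ_self))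
          linarith [norm_add_le (e - γ (n * h)) (h • (b (n * h, e) - b (n * h, γ (n * h))))]
      _ ≤ Real.exp (|h| * K) * (n * |h| * δ * Real.exp (n * |h| * K)) + δ * |h| *
            Real.exp ((n + 1) * |h| * K) := by
          refine add_le_add ?_
            (le_mul_of_one_le_right (by positivity) (Real.one_le_exp (by positivity)))
          gcongr
          linarith [Real.add_one_le_exp (|h| * K)]
      _ = (n + 1 : ℕ) * |h| * δ * Real.exp ((n + 1 : ℕ) * |h| * K) := by
          have hexp : Real.exp ((n + 1) * |h| * K) =
              Real.exp (|h| * K) * Real.exp (n * |h| * K) := by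
            rw [← Real.exp_add]
            ring_nf
          push_cast
          rw [hexp]
          ring

lemma norm_sub_sub_smul_le_of_hasDerivAt {γ γ' : ℝ → Z} (hγ : ∀ s, HasDerivAt γ (γ' s) s)
    {s s' δ : ℝ} (hδ : ∀ r ∈ uIcc s s', ‖γ' r - γ' s‖ ≤ δ) :
    ‖γ s' - γ s - (s' - s) • γ' s‖ ≤ δ * |s' - s| := by
  have hderiv (r : ℝ) : HasDerivAt (fun r => γ r - (r - s) • γ' s) (γ' r - γ' s) r := by
    simpa using (hγ r).fun_sub (((hasDerivAt_id r).sub_const s).smul_const (γ' s))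
  simpa [sub_right_comm] using (convex_uIcc s s').norm_image_sub_le_of_norm_hasDerivWithin_le
    (fun r _ => (hderiv r).hasDerivWithinAt) hδ left_mem_uIcc right_mem_uIcc

lemma mul_div_mem_Icc_abs (t : ℝ) {k n : ℕ} (hkn : k ≤ n) : k * (t / n) ∈ Icc (-|t|) |t| := by
  rw [mem_Icc, ← abs_le, abs_mul, abs_div, Nat.abs_cast, Nat.abs_cast, mul_div_assoc', mul_comm,
    mul_div_assoc]
  exact mul_le_of_le_one_right (abs_nonneg t) (div_le_one_of_le₀ (by exact_mod_cast hkn)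
    n.cast_nonneg)

lemma eventually_norm_sub_sub_smul_le {γ γ' : ℝ → Z} (hγ : ∀ s, HasDerivAt γ (γ' s) s)
    (hγ' : Continuous γ') (t : ℝ) {δ : ℝ} (hδ : 0 < δ) :
    ∀ᶠ n : ℕ in atTop, ∀ k < n, ‖γ ((k + 1 : ℕ) * (t / n)) - γ (k * (t / n)) -
      (t / n) • γ' (k * (t / n))‖ ≤ δ * |t / n| := by
  obtain ⟨ρ, hρ, hunif⟩ := Metric.uniformContinuousOn_iff.1
    ((isCompact_Icc (a := -|t|) (b := |t|)).uniformContinuousOn_of_continuous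
      hγ'.continuousOn) δ hδ
  have hsmall : ∀ᶠ n : ℕ in atTop, |t / n| < ρ := by
    simpa using (tendsto_const_div_atTop_nhds_zero_nat t).abs.eventually_lt_const (by simpa)
  filter_upwards [hsmall] with n hn k hk
  have hsub : ((k + 1 : ℕ) : ℝ) * (t / n) - k * (t / n) = t / n := by push_cast; ring
  have hvelocity (r : ℝ) (hr : r ∈ uIcc (k * (t / n)) ((k + 1 : ℕ) * (t / n))) :
      ‖γ' r - γ' (k * (t / n))‖ ≤ δ := by
    have hk₀ := mul_div_mem_Icc_abs t hk.le
    rw [← dist_eq_norm]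
    refine (hunif r (uIcc_subset_Icc hk₀ (mul_div_mem_Icc_abs t hk) hr) _ hk₀ ?_).le
    exact (abs_sub_left_of_mem_uIcc hr).trans_lt (by rwa [hsub])
  simpa only [hsub] using norm_sub_sub_smul_le_of_hasDerivAt hγ hvelocity

lemma tendsto_eulerIterate {K : ℝ → ℝ} (hb : Continuous b) (hK : Continuous K)
    (hbK : ∀ s z z', ‖b (s, z) - b (s, z')‖ ≤ K s * ‖z - z'‖) {γ : ℝ → Z}
    (hγ : ∀ s, HasDerivAt γ (b (s, γ s)) s) (t : ℝ) :
    Tendsto (fun n : ℕ => eulerIterate b (t / n) n (γ 0)) atTop (𝓝 (γ t)) := by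
  have hγcont : Continuous γ := continuous_iff_continuousAt.2 fun s => (hγ s).continuousAt
  obtain ⟨C, hC⟩ := (isCompact_Icc (a := -|t|) (b := |t|)).exists_bound_of_continuousOn
    hK.continuousOn
  have hC₀ : 0 ≤ C := (norm_nonneg _).trans (hC 0 (by simp))
  refine Metric.tendsto_nhds.2 fun η hη => ?_
  set M := |t| * Real.exp (|t| * C)
  have : 0 ≤ M := by positivity
  filter_upwards [eventually_gt_atTop 0, eventually_norm_sub_sub_smul_le hγ (by fun_prop) t
    (δ := η / (M + 1)) (by positivity)] with n hn hdefect
  have hn₀ : (n : ℝ) ≠ 0 := by exact_mod_cast hn.ne'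
  have herror := norm_eulerIterate_sub_curve_le (b := b) hC₀ (by positivity)
    (fun k hk z z' => (hbK _ z z').trans (mul_le_mul_of_nonneg_right
      ((le_abs_self _).trans (hC _ (mul_div_mem_Icc_abs t hk.le))) (norm_nonneg _))) hdefect
  have htotal : (n : ℝ) * |t / n| = |t| := by
    rw [abs_div, Nat.abs_cast, mul_div_cancel₀ _ hn₀]
  rw [htotal, mul_div_cancel₀ _ hn₀, ← dist_eq_norm] at herror
  calc dist _ _ ≤ M * (η / (M + 1)) := herror.trans_eq (by ring)
    _ < η := by
        rw [mul_div_assoc', div_lt_iff₀ (by positivity)]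
        linarith

theorem IsFlow.measurePreserving [ProperSpace Z] [MeasurableSpace Z] [BorelSpace Z]
    {ν : Measure Z} [ν.Regular] {Φ : ℝ → Z ≃ₜ Z} (hΦ : IsFlow b Φ) {A K : ℝ → ℝ}
    (hb : Continuous b) (hA : Continuous A) (hK : Continuous K) (hbA : ∀ s z, ‖b (s, z)‖ ≤ A s)
    (hbK : ∀ s z z', ‖b (s, z) - b (s, z')‖ ≤ K s * ‖z - z'‖)
    (hstep : ∀ h s : ℝ, MeasurePreserving (fun z : Z => z + h • b (s, z)) ν ν) (t : ℝ) :
    MeasurePreserving (Φ t) ν ν := by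
  obtain ⟨C, hC⟩ := (isCompact_Icc (a := -|t|) (b := |t|)).exists_bound_of_continuousOn
    hA.continuousOn
  refine measurePreserving_of_tendsto (Φ t)
    (fun n : ℕ => measurePreserving_eulerIterate hstep (t / n) n)
    (R := |t| * C) (fun n z => ?_) fun z => ?_
  · have htotal : n * |t / n| ≤ |t| := by
      simpa [abs_mul] using abs_le.2 (mul_div_mem_Icc_abs t (le_refl n))
    refine (norm_eulerIterate_sub_le (A := C) (fun k hk z => (hbA _ z).trans
      ((le_abs_self _).trans (hC _ (mul_div_mem_Icc_abs t hk.le)))) z).trans ?_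
    exact mul_le_mul_of_nonneg_right htotal ((norm_nonneg _).trans (hC 0 (by simp)))
  · simpa [hΦ.map_zero] using tendsto_eulerIterate hb hK hbK (fun s => hΦ.hasDerivAt s z) t

end Euler

section Shear

variable {X Y : Type*} [MeasurableSpace X] [MeasurableSpace Y] {ν : Measure X} {m : Measure Y}

lemma measurePreserving_add_snd [SFinite ν] [SFinite m] [AddGroup Y] [MeasurableAdd₂ Y]
    [m.IsAddRightInvariant] {f : X → Y} (hf : Measurable f) :
    MeasurePreserving (fun q : X × Y => (q.1, q.2 + f q.1)) (ν.prod m) (ν.prod m) :=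
  (MeasurePreserving.id ν).skew_product (g := fun x y => y + f x)
    (measurable_snd.add (hf.comp measurable_fst))
    (Eventually.of_forall fun x => (measurePreserving_add_right m (f x)).map_eq)

lemma measurePreserving_add_fst [SFinite ν] [SFinite m] [AddGroup X] [MeasurableAdd₂ X]
    [ν.IsAddRightInvariant] {f : Y → X} (hf : Measurable f) :
    MeasurePreserving (fun q : X × Y => (q.1 + f q.2, q.2)) (ν.prod m) (ν.prod m) :=
  Measure.measurePreserving_swap.comp
    ((measurePreserving_add_snd hf).comp Measure.measurePreserving_swap)

lemma measurePreserving_of_prodMap_id [SigmaFinite m] [NeZero m] {T : X → X}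
    (hT : Measurable T) (h : MeasurePreserving (Prod.map T id) (ν.prod m) (ν.prod m)) :
    MeasurePreserving T ν ν := by
  obtain ⟨B, hB, -, hB₀, hBtop⟩ := m.exists_subset_measure_lt_top MeasurableSet.univ
    (r := 0) (Measure.measure_univ_pos.2 (NeZero.ne m))
  refine ⟨hT, Measure.ext fun A hA => ?_⟩
  have hAB := h.measure_preimage (hA.prod hB).nullMeasurableSet
  rw [preimage_prod_map_prod, preimage_id, Measure.prod_prod, Measure.prod_prod] at hAB
  rwa [Measure.map_apply hT hA, ← ENNReal.mul_left_inj hB₀.ne' hBtop.ne]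

variable {Z E V : Type*} [NormedAddCommGroup Z] [NormedSpace ℝ Z] [FiniteDimensional ℝ Z]
  [MeasurableSpace Z] [BorelSpace Z]
  [NormedAddCommGroup E] [NormedSpace ℝ E] [MeasurableSpace E] [BorelSpace E]
  [NormedAddCommGroup V] [NormedSpace ℝ V] [FiniteDimensional ℝ V] [MeasurableSpace V]
  [BorelSpace V]

/-- Adding a `V`-variable `u`, the shear is the commutator of the two skew translations
`z ↦ z + w u` and `u ↦ u + g (ℓ z)`. -/
lemma measurePreserving_shear (ν : Measure Z) [ν.IsAddHaarMeasure] {ℓ : Z →L[ℝ] E} {w : V →L[ℝ] Z}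
    (hℓw : ℓ ∘L w = 0) {g : E → V} (hg : Measurable g) :
    MeasurePreserving (fun z => z + w (g (ℓ z))) ν ν := by
  let m : Measure V := Measure.addHaar
  have hℓw' (u : V) : ℓ (w u) = 0 := DFunLike.congr_fun hℓw u
  have hgℓ : Measurable fun z => g (ℓ z) := hg.comp ℓ.measurable
  refine measurePreserving_of_prodMap_id (m := m) (by fun_prop) ?_
  have hcommutator := ((measurePreserving_add_snd (ν := ν) (m := m) hgℓ.neg).comp
    (measurePreserving_add_fst w.measurable)).comp ((measurePreserving_add_snd hgℓ).comp
    (measurePreserving_add_fst w.measurable.neg))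
  convert hcommutator using 1
  ext q <;> simp [hℓw']

end Shear

section MeanField

variable {Ω E V : Type*} [MeasurableSpace Ω] {ν : Measure Ω} {g₀ : Ω → ℝ}
  [NormedAddCommGroup E] [NormedAddCommGroup V] [NormedSpace ℝ V]

/-- The force at time `t` and position `x` exerted through the interaction `G` by the particles
located at `X (t, z)`, where the labels `z` are distributed with (signed) density `g₀`. -/
noncomputable def meanField (ν : Measure Ω) (g₀ : Ω → ℝ) (G : E → V) (X : ℝ × Ω → E)
    (q : ℝ × E) : V :=
  ∫ z, g₀ z • G (q.2 - X (q.1, z)) ∂ν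

lemma norm_meanField_le (hg₀ : Integrable g₀ ν) {G : E → V} {M : ℝ} (hG : ∀ x, ‖G x‖ ≤ M)
    (X : ℝ × Ω → E) (q : ℝ × E) : ‖meanField ν g₀ G X q‖ ≤ (∫ z, ‖g₀ z‖ ∂ν) * M := by
  rw [meanField, ← integral_mul_const]
  refine norm_integral_le_of_norm_le (hg₀.norm.mul_const M) (Eventually.of_forall fun z => ?_)
  rw [norm_smul]
  gcongr
  exact hG _

section Continuous

variable [TopologicalSpace Ω] [OpensMeasurableSpace Ω] [SecondCountableTopology Ω]
  {G : E → V} {M : ℝ} {X X' : ℝ × Ω → E}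

lemma integrable_smul_of_norm_le (hg₀ : Integrable g₀ ν) {F : Ω → V} (hF : Continuous F)
    (hM : ∀ z, ‖F z‖ ≤ M) : Integrable (fun z => g₀ z • F z) ν :=
  hg₀.smul_bdd M hF.aestronglyMeasurable (Eventually.of_forall hM)

lemma continuous_meanField (hg₀ : Integrable g₀ ν) (hG : Continuous G) (hM : ∀ x, ‖G x‖ ≤ M)
    (hX : Continuous X) : Continuous (meanField ν g₀ G X) := by
  refine continuous_of_dominated (bound := fun z => ‖g₀ z‖ * M)
    (fun q => (integrable_smul_of_norm_le hg₀ (by fun_prop) fun z => hM _).aestronglyMeasurable)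
    (fun q => Eventually.of_forall fun z => ?_) (hg₀.norm.mul_const M)
    (Eventually.of_forall fun z => by fun_prop)
  rw [norm_smul]
  gcongr
  exact hM _

lemma norm_meanField_sub_le (hg₀ : Integrable g₀ ν) {L : NNReal} (hG : LipschitzWith L G)
    (hM : ∀ x, ‖G x‖ ≤ M) (hX : Continuous X) (hX' : Continuous X') {t C : ℝ} {x x' : E}
    (hC : ∀ z, ‖(x - X (t, z)) - (x' - X' (t, z))‖ ≤ C) :
    ‖meanField ν g₀ G X (t, x) - meanField ν g₀ G X' (t, x')‖ ≤ (∫ z, ‖g₀ z‖ ∂ν) * (L * C) := by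
  have hGc := hG.continuous
  rw [meanField, meanField, ← integral_sub
    (integrable_smul_of_norm_le hg₀ (by fun_prop) fun z => hM _)
    (integrable_smul_of_norm_le hg₀ (by fun_prop) fun z => hM _), ← integral_mul_const]
  refine norm_integral_le_of_norm_le (hg₀.norm.mul_const _) (Eventually.of_forall fun z => ?_)
  rw [← smul_sub, norm_smul]
  gcongr
  exact (hG.norm_sub_le _ _).trans (by gcongr; exact hC z)

lemma norm_meanField_sub_le_mul (hg₀ : Integrable g₀ ν) {L : NNReal} (hG : LipschitzWith L G)
    (hM : ∀ x, ‖G x‖ ≤ M) (hX : Continuous X) (t : ℝ) (x x' : E) :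
    ‖meanField ν g₀ G X (t, x) - meanField ν g₀ G X (t, x')‖ ≤
      (∫ z, ‖g₀ z‖ ∂ν) * L * ‖x - x'‖ := by
  rw [mul_assoc]
  exact norm_meanField_sub_le hg₀ hG hM hX hX fun z => by rw [sub_sub_sub_cancel_right]

/-- Rademacher's theorem applies because a null set of positions is only reached by a null set of
labels. -/
lemma hasFDerivAt_meanField [NormedSpace ℝ E] [FiniteDimensional ℝ E] [MeasurableSpace E]
    [BorelSpace E] [FiniteDimensional ℝ V] (μ : Measure E) [μ.IsAddHaarMeasure]
    (hg₀ : Integrable g₀ ν) {L : NNReal} (hG : LipschitzWith L G) (hM : ∀ x, ‖G x‖ ≤ M)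
    (hX : Continuous X) {t : ℝ} (hXμ : Measure.QuasiMeasurePreserving (fun z => X (t, z)) ν μ)
    (x : E) : HasFDerivAt (fun x => meanField ν g₀ G X (t, x))
      (meanField ν g₀ (fderiv ℝ G) X (t, x)) x := by
  have hGc := hG.continuous
  have hdiff : ∀ᵐ z ∂ν, DifferentiableAt ℝ G (x - X (t, z)) :=
    ((quasiMeasurePreserving_sub_left μ x).comp hXμ).ae hG.ae_differentiableAt
  have hint (x : E) : Integrable (fun z => g₀ z • G (x - X (t, z))) ν :=
    integrable_smul_of_norm_le hg₀ (by fun_prop) fun z => hM _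
  have hmeas : AEStronglyMeasurable (fun z => g₀ z • fderiv ℝ G (x - X (t, z))) ν :=
    hg₀.aestronglyMeasurable.smul ((measurable_fderiv ℝ G).comp
      (by fun_prop : Continuous fun z => x - X (t, z)).measurable).aestronglyMeasurable
  refine (hasFDerivAt_integral_of_dominated_loc_of_lip (bound := fun z => ‖g₀ z‖ * L) univ_mem
    (Eventually.of_forall fun x => (hint x).aestronglyMeasurable) (hint x) hmeas
    (Eventually.of_forall fun z => ?_) (hg₀.norm.mul_const _) ?_).2
  · refine LipschitzOnWith.of_dist_le_mul fun x _ x' _ => ?_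
    rw [dist_eq_norm, dist_eq_norm, ← smul_sub, norm_smul, Real.coe_nnabs,
      abs_of_nonneg (by positivity), mul_assoc]
    gcongr
    simpa using hG.norm_sub_le (x - X (t, z)) (x' - X (t, z))
  · filter_upwards [hdiff] with z hz
    exact ((hasFDerivAt_comp_sub _).2 hz.hasFDerivAt).const_smul (g₀ z)

end Continuous

lemma continuous_integral_comp_smul {S : Type*} [TopologicalSpace S] [TopologicalSpace Ω]
    [BorelSpace Ω] [R1Space Ω] [ν.InnerRegularCompactLTTop] [IsLocallyFiniteMeasure ν]
    [CompleteSpace V] {θ : S × Ω → Ω} (hθ : Continuous θ)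
    (hθν : ∀ s, MeasurePreserving (fun z => θ (s, z)) ν ν) (hg₀ : Integrable g₀ ν) {D : Ω → V}
    (hD : AEStronglyMeasurable D ν) {C : ℝ} (hC : ∀ z, ‖D z‖ ≤ C) :
    Continuous fun s => ∫ z, g₀ (θ (s, z)) • D z ∂ν := by
  let Θ : C(S, C(Ω, Ω)) := ContinuousMap.curry ⟨θ, hθ⟩
  let D' : Lp V ⊤ ν := (memLp_top_of_bound hD C (Eventually.of_forall hC)).toLp
  let g (s : S) : Lp ℝ 1 ν := Lp.compMeasurePreserving (Θ s) (hθν s) hg₀.toL1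
  have hg : Continuous g :=
    continuous_const.compMeasurePreservingLp Θ.continuous hθν ENNReal.one_ne_top
  have hpair (s : S) : (ContinuousLinearMap.lsmul ℝ ℝ).lpPairing ν 1 ⊤ (g s) D' =
      ∫ z, g₀ (θ (s, z)) • D z ∂ν := by
    rw [ContinuousLinearMap.lpPairing_eq_integral]
    refine integral_congr_ae ?_
    filter_upwards [MemLp.coeFn_toLp (memLp_top_of_bound hD C (Eventually.of_forall hC)),
      (hθν s).integrable_comp_of_integrable hg₀ |>.coeFn_toL1] with z hDz hgz
    exact congr_arg₂ (· • ·) hgz hDz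
  simp_rw [← hpair]
  fun_prop

end MeanField

section LiftField

variable {Z E V : Type*} [NormedAddCommGroup Z] [NormedSpace ℝ Z] [NormedAddCommGroup E]
  [NormedSpace ℝ E] [NormedAddCommGroup V] [NormedSpace ℝ V]
  {ℓ : ℝ → Z →L[ℝ] E} {w : ℝ → V →L[ℝ] Z} {F : ℝ × E → V}

/-- The vector field on `Z` which reads the force `F` at the position `ℓ t z` and lets it act in
the direction `w t`. -/
def liftField (ℓ : ℝ → Z →L[ℝ] E) (w : ℝ → V →L[ℝ] Z) (F : ℝ × E → V) (q : ℝ × Z) : Z :=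
  w q.1 (F (q.1, ℓ q.1 q.2))

lemma continuous_liftField (hℓ : Continuous ℓ) (hw : Continuous w) (hF : Continuous F) :
    Continuous (liftField ℓ w F) := by
  unfold liftField
  fun_prop

lemma norm_liftField_le {A : ℝ} (hA : ∀ q, ‖F q‖ ≤ A) (t : ℝ) (z : Z) :
    ‖liftField ℓ w F (t, z)‖ ≤ ‖w t‖ * A :=
  (w t).le_opNorm_of_le (hA _)

lemma norm_liftField_sub_le {F' : ℝ × E → V} {t C : ℝ} {z z' : Z}
    (h : ‖F (t, ℓ t z) - F' (t, ℓ t z')‖ ≤ C) :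
    ‖liftField ℓ w F (t, z) - liftField ℓ w F' (t, z')‖ ≤ ‖w t‖ * C := by
  rw [liftField, liftField, ← map_sub]
  exact (w t).le_opNorm_of_le h

lemma norm_liftField_sub_le_of_lipschitz {K : ℝ} (hK₀ : 0 ≤ K)
    (hK : ∀ t x x', ‖F (t, x) - F (t, x')‖ ≤ K * ‖x - x'‖) (t : ℝ) (z z' : Z) :
    ‖liftField ℓ w F (t, z) - liftField ℓ w F (t, z')‖ ≤ ‖w t‖ * (K * ‖ℓ t‖) * ‖z - z'‖ := by
  rw [mul_assoc, mul_assoc]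
  refine norm_liftField_sub_le ((hK _ _ _).trans ?_)
  rw [← map_sub]
  gcongr
  exact (ℓ t).le_opNorm _

variable {Φ : ℝ → Z ≃ₜ Z}

lemma IsFlow.contDiff_symm_liftField [CompleteSpace Z] (hΦ : IsFlow (liftField ℓ w F) Φ)
    (hℓ : Continuous ℓ) (hw : Continuous w) (hF : Continuous F) {D : ℝ × E → E →L[ℝ] V}
    (hD : Continuous D) (hFD : ∀ t x, HasFDerivAt (fun x => F (t, x)) (D (t, x)) x) {K : ℝ}
    (hK : ∀ q, ‖D q‖ ≤ K) : ContDiff ℝ 1 fun q : ℝ × Z => (Φ q.1).symm q.2 := by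
  refine hΦ.contDiff_symm (Db := fun q => w q.1 ∘L D (q.1, ℓ q.1 q.2) ∘L ℓ q.1)
    (K := fun t => ‖w t‖ * (K * ‖ℓ t‖))
    (continuous_liftField hℓ hw hF) (by fun_prop) (fun t z => ?_) (by fun_prop) fun t z => ?_
  · exact (w t).hasFDerivAt.comp z ((hFD t (ℓ t z)).comp z (ℓ t).hasFDerivAt)
  · refine (ContinuousLinearMap.opNorm_comp_le _ _).trans ?_
    gcongr
    refine (ContinuousLinearMap.opNorm_comp_le _ _).trans ?_
    gcongr
    exact hK _

lemma IsFlow.measurePreserving_liftField [FiniteDimensional ℝ Z] [MeasurableSpace Z] [BorelSpace Z]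
    [FiniteDimensional ℝ V] (ν : Measure Z) [ν.IsAddHaarMeasure]
    (hΦ : IsFlow (liftField ℓ w F) Φ)
    (hℓ : Continuous ℓ) (hw : Continuous w) (hℓw : ∀ t, ℓ t ∘L w t = 0) (hF : Continuous F)
    {A : ℝ} (hA : ∀ q, ‖F q‖ ≤ A) {K : ℝ} (hK₀ : 0 ≤ K)
    (hK : ∀ t x x', ‖F (t, x) - F (t, x')‖ ≤ K * ‖x - x'‖) (t : ℝ) :
    MeasurePreserving (Φ t) ν ν := by
  borelize E V
  have := FiniteDimensional.proper_real Z
  refine hΦ.measurePreserving (continuous_liftField hℓ hw hF) (A := fun t => ‖w t‖ * A)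
    (K := fun t => ‖w t‖ * (K * ‖ℓ t‖)) (by fun_prop) (by fun_prop) (norm_liftField_le hA)
    (norm_liftField_sub_le_of_lipschitz hK₀ hK) (fun h s => ?_) t
  have hg : Continuous fun x => h • F (s, x) := by fun_prop
  simpa [liftField] using measurePreserving_shear ν (hℓw s) hg.measurable

end LiftField

section MeanFieldFlow

variable {Z E V : Type*} [NormedAddCommGroup Z] [NormedSpace ℝ Z] [FiniteDimensional ℝ Z]
  [MeasurableSpace Z] [BorelSpace Z] {ν : Measure Z}
  [NormedAddCommGroup E] [NormedSpace ℝ E] [NormedAddCommGroup V] [NormedSpace ℝ V]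
  {ℓ : ℝ → Z →L[ℝ] E} {w : ℝ → V →L[ℝ] Z} {r : E →L[ℝ] Z} {g₀ : Z → ℝ} {G : E → V}
  {M : ℝ} {L : NNReal} {Φ : ℝ → Z ≃ₜ Z}

/-- The self-consistent force: the mean field of the particles whose positions `ℓ t (Φ t z)` are
read off the maps `Φ t`. -/
noncomputable def flowForce (ν : Measure Z) (g₀ : Z → ℝ) (G : E → V) (ℓ : ℝ → Z →L[ℝ] E)
    (Φ : ℝ → Z ≃ₜ Z) : ℝ × E → V :=
  meanField ν g₀ G fun q => ℓ q.1 (Φ q.1 q.2)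

lemma norm_liftField_meanField_sub_le (hg₀ : Integrable g₀ ν) (hG : LipschitzWith L G)
    (hM : ∀ x, ‖G x‖ ≤ M) {y y' : ℝ × Z → Z} (hy : Continuous fun q : ℝ × Z => ℓ q.1 (y q))
    (hy' : Continuous fun q : ℝ × Z => ℓ q.1 (y' q)) {t C : ℝ}
    (hC : ∀ z, ‖y (t, z) - y' (t, z)‖ ≤ C) (z : Z) :
    ‖liftField ℓ w (meanField ν g₀ G fun q => ℓ q.1 (y q)) (t, y (t, z)) -
        liftField ℓ w (meanField ν g₀ G fun q => ℓ q.1 (y' q)) (t, y' (t, z))‖ ≤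
      ‖w t‖ * ((∫ z, ‖g₀ z‖ ∂ν) * (L * (2 * ‖ℓ t‖))) * C := by
  have := FiniteDimensional.proper_real Z
  have hℓC (z : Z) := (ℓ t).le_opNorm_of_le (hC z)
  refine (norm_liftField_sub_le (norm_meanField_sub_le hg₀ hG hM hy hy'
    (C := ‖ℓ t‖ * C + ‖ℓ t‖ * C) fun z' => ?_)).trans_eq (by ring)
  rw [sub_sub_sub_comm, ← map_sub, ← map_sub]
  exact (norm_sub_le _ _).trans (add_le_add (hℓC z) (hℓC z'))

theorem exists_isFlow_flowForce [CompleteSpace V] (hℓ : Continuous ℓ) (hw : Continuous w)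
    (hg₀ : Integrable g₀ ν) (hG : LipschitzWith L G) (hM : ∀ x, ‖G x‖ ≤ M) :
    ∃ Φ : ℝ → Z ≃ₜ Z, IsFlow (liftField ℓ w (flowForce ν g₀ G ℓ Φ)) Φ := by
  have := FiniteDimensional.proper_real Z
  let force (y : ℝ × Z → Z) : ℝ × E → V := meanField ν g₀ G fun q => ℓ q.1 (y q)
  have hfield {y : ℝ × Z → Z} (hy : Continuous y) : Continuous (liftField ℓ w (force y)) :=
    continuous_liftField hℓ hw (continuous_meanField hg₀ hG.continuous hM (by fun_prop))
  have hbound (y : ℝ × Z → Z) := norm_liftField_le (ℓ := ℓ) (w := w) (F := force y)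
    (norm_meanField_le hg₀ hM _)
  obtain ⟨y, hy, hy₀, hderiv, -⟩ :=
    exists_hasDerivAt_nonlocal (y₀ := fun z : Z => z)
      (H := fun y q => liftField ℓ w (force y) (q.1, y q))
      continuous_id (fun y hy => (hfield hy).comp (by fun_prop))
      (by fun_prop) (by fun_prop) (fun s z => hbound _ s z)
      (fun y y' hy hy' s C hC =>
        norm_liftField_meanField_sub_le hg₀ hG hM (by fun_prop) (by fun_prop) hC)
  have hlip := norm_liftField_sub_le_of_lipschitz (ℓ := ℓ) (w := w) (F := force y) (by positivity)
    (norm_meanField_sub_le_mul hg₀ hG hM (by fun_prop))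
  obtain ⟨Φ, hΦ⟩ := exists_isFlow (hfield hy) (by fun_prop) (by fun_prop) (hbound y) hlip
  have hΦy (t : ℝ) (z : Z) : Φ t z = y (t, z) := congr_fun (eq_of_hasDerivAt (by fun_prop) hlip
    (fun t => hΦ.hasDerivAt t z) (fun t => hderiv t z) ((hΦ.map_zero z).trans (hy₀ z).symm)) t
  refine ⟨Φ, ?_⟩
  simp only [flowForce, hΦy]
  exact hΦ

lemma quasiMeasurePreserving_of_surjective {E : Type*} [NormedAddCommGroup E] [NormedSpace ℝ E]
    [MeasurableSpace E] [BorelSpace E] (ν : Measure Z) [ν.IsAddHaarMeasure] (μ : Measure E)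
    [μ.IsAddHaarMeasure] {ℓ : Z →L[ℝ] E} (hℓ : Function.Surjective ℓ) :
    Measure.QuasiMeasurePreserving ℓ ν μ := by
  have := FiniteDimensional.proper_real Z
  obtain ⟨c, -, hc⟩ := (ℓ : Z →ₗ[ℝ] E).exists_map_addHaar_eq_smul_addHaar ν μ hℓ
  exact ⟨ℓ.measurable, hc ▸ Measure.smul_absolutelyContinuous⟩

/-- The integrand depends on `(t, x)` through the merely measurable `D`. The volume-preserving
substitution `z = (Φ t)⁻¹ (u + r (x + ℓ 0 u - ℓ t u))` gives `ℓ t (Φ t z) = x + ℓ 0 u`, so that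
`(t, x)` only enters through the translated density. -/
lemma continuous_flowForce_of_measurable [ν.IsAddHaarMeasure] [MeasurableSpace E] [BorelSpace E]
    [FiniteDimensional ℝ E] [CompleteSpace V] (hg₀ : Integrable g₀ ν)
    (hΦ : Continuous fun q : ℝ × Z => (Φ q.1).symm q.2) (hΦν : ∀ t, MeasurePreserving (Φ t) ν ν)
    (hℓ : Continuous ℓ) (hℓr : ∀ t, ℓ t ∘L r = .id ℝ E) (hG : StronglyMeasurable G)
    (hM : ∀ x, ‖G x‖ ≤ M) : Continuous (flowForce ν g₀ G ℓ Φ) := by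
  have := FiniteDimensional.proper_real Z
  have hℓr' (t : ℝ) (x : E) : ℓ t (r x) = x := DFunLike.congr_fun (hℓr t) x
  let shear (q : ℝ × E) (u : Z) : Z := u + r (q.2 + (ℓ 0 - ℓ q.1) u)
  let θ (p : (ℝ × E) × Z) : Z := (Φ p.1.1).symm (shear p.1 p.2)
  have hθ : Continuous θ := hΦ.comp (f := fun p : (ℝ × E) × Z => (p.1.1, shear p.1 p.2))
    (by fun_prop)
  have hshear (q : ℝ × E) : MeasurePreserving (shear q) ν ν :=
    measurePreserving_shear ν (ℓ := ℓ 0 - ℓ q.1) (w := r) (g := fun y => q.2 + y)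
      (by ext x; simp [hℓr']) (by fun_prop)
  have hθν (q : ℝ × E) : MeasurePreserving (fun u => θ (q, u)) ν ν :=
    ((hΦν q.1).symm (Φ q.1).toMeasurableEquiv).comp (hshear q)
  have hposition (q : ℝ × E) (u : Z) : q.2 - ℓ q.1 (Φ q.1 (θ (q, u))) = -ℓ 0 u := by
    simp only [θ, shear, Homeomorph.apply_symm_apply, map_add, hℓr', sub_apply]
    abel
  have hmeas (q : ℝ × E) :
      AEStronglyMeasurable (fun z => g₀ z • G (q.2 - ℓ q.1 (Φ q.1 z))) ν :=
    hg₀.aestronglyMeasurable.smul (hG.comp_measurable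
      (by fun_prop : Continuous fun z => q.2 - ℓ q.1 (Φ q.1 z)).measurable).aestronglyMeasurable
  have hsubst (q : ℝ × E) : flowForce ν g₀ G ℓ Φ q = ∫ u, g₀ (θ (q, u)) • G (-ℓ 0 u) ∂ν := by
    rw [flowForce, meanField, ← (hθν q).map_eq, integral_map (hθν q).aemeasurable
      ((hθν q).map_eq.symm ▸ hmeas q), (hθν q).map_eq]
    simp only [hposition]
  rw [funext hsubst]
  exact continuous_integral_comp_smul hθ hθν hg₀
    (hG.comp_measurable (ℓ 0).measurable.neg).aestronglyMeasurable fun u => hM _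

theorem exists_meanField_flow [ν.IsAddHaarMeasure] [FiniteDimensional ℝ E]
    [FiniteDimensional ℝ V] (hℓ : Continuous ℓ) (hw : Continuous w) (hℓw : ∀ t, ℓ t ∘L w t = 0)
    (hℓr : ∀ t, ℓ t ∘L r = .id ℝ E) (hg₀ : Integrable g₀ ν) (hG : LipschitzWith L G)
    (hM : ∀ x, ‖G x‖ ≤ M) :
    ∃ Φ : ℝ → Z ≃ₜ Z, IsFlow (liftField ℓ w (flowForce ν g₀ G ℓ Φ)) Φ ∧
      (∀ t, MeasurePreserving (Φ t) ν ν) ∧ ContDiff ℝ 1 fun q : ℝ × Z => (Φ q.1).symm q.2 := by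
  borelize E
  have := FiniteDimensional.proper_real Z
  have := FiniteDimensional.complete ℝ V
  have := FiniteDimensional.complete ℝ Z
  obtain ⟨Φ, hΦ⟩ := exists_isFlow_flowForce hℓ hw hg₀ hG hM
  have hX : Continuous fun q : ℝ × Z => ℓ q.1 (Φ q.1 q.2) := by
    have := hΦ.continuous
    fun_prop
  have hF : Continuous (flowForce ν g₀ G ℓ Φ) := continuous_meanField hg₀ hG.continuous hM hX
  have hΦν := hΦ.measurePreserving_liftField ν hℓ hw hℓw hF (norm_meanField_le hg₀ hM _)
    (by positivity) (norm_meanField_sub_le_mul hg₀ hG hM hX)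
  have hℓΦ (t : ℝ) : Measure.QuasiMeasurePreserving (fun z => ℓ t (Φ t z)) ν
      (Measure.addHaar : Measure E) :=
    (quasiMeasurePreserving_of_surjective ν _
      fun x => ⟨r x, DFunLike.congr_fun (hℓr t) x⟩).comp (hΦν t).quasiMeasurePreserving
  have hL (x : E) : ‖fderiv ℝ G x‖ ≤ L := norm_fderiv_le_of_lipschitz ℝ hG
  have hD : Continuous (flowForce ν g₀ (fderiv ℝ G) ℓ Φ) :=
    continuous_flowForce_of_measurable hg₀ hΦ.continuous_symm hΦν hℓ hℓr
      (measurable_fderiv ℝ G).stronglyMeasurable hL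
  exact ⟨Φ, hΦ, hΦν, hΦ.contDiff_symm_liftField hℓ hw hF hD
    (fun t x => hasFDerivAt_meanField _ hg₀ hG hM hX (hℓΦ t) x) (norm_meanField_le hg₀ hL _)⟩

end MeanFieldFlow

section Weighted

variable {Ω Ω' V : Type*} [MeasurableSpace Ω] [MeasurableSpace Ω'] {m : Measure Ω} {ν : Measure Ω'}
  [NormedAddCommGroup V] [NormedSpace ℝ V] {c : ℝ} {S : Ω → Ω'}

lemma integrable_const_smul_comp (hc : 0 < c)
    (hS : MeasurePreserving S (ENNReal.ofReal c • m) ν) {H : Ω' → V} (hH : Integrable H ν) :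
    Integrable (fun p => c • H (S p)) m :=
  ((integrable_smul_measure (ENNReal.ofReal_ne_zero_iff.2 hc) ENNReal.ofReal_ne_top).1
    (hS.integrable_comp_of_integrable hH)).smul c

lemma integral_const_smul_comp (hc : 0 ≤ c)
    (hS : MeasurePreserving S (ENNReal.ofReal c • m) ν) {H : Ω' → V}
    (hH : AEStronglyMeasurable H ν) : ∫ p, c • H (S p) ∂m = ∫ z, H z ∂ν := by
  rw [← hS.map_eq, integral_map hS.aemeasurable (hS.map_eq.symm ▸ hH), integral_smul_measure,
    ENNReal.toReal_ofReal hc, integral_smul]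

end Weighted

section FreeInvariant

variable {E : Type*} [NormedAddCommGroup E] [NormedSpace ℝ E] {ε : ℝ}

/-- The quantities `(x + ε v, exp (t / ε) v)`, which are conserved by the force-free motion
`x' = v`, `ε v' = -v`. -/
noncomputable def freeInvariant (ε : ℝ) (q : ℝ × E × E) : E × E :=
  (q.2.1 + ε • q.2.2, Real.exp (q.1 / ε) • q.2.2)

/-- The position `x` at time `t` as a function of the free invariants. -/
noncomputable def position (ε t : ℝ) : E × E →L[ℝ] E :=
  .fst ℝ E E - (ε * Real.exp (-(t / ε))) • .snd ℝ E E

/-- The rate of change of the free invariants at time `t` as a function of the force `F` in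
`ε v' = -(v + F)`. -/
noncomputable def impulse (ε t : ℝ) : E →L[ℝ] E × E :=
  -.inl ℝ E E - (ε⁻¹ * Real.exp (t / ε)) • .inr ℝ E E

lemma continuous_position : Continuous (position ε : ℝ → E × E →L[ℝ] E) := by
  unfold position
  fun_prop

lemma continuous_impulse : Continuous (impulse ε : ℝ → E →L[ℝ] E × E) := by
  unfold impulse
  fun_prop

lemma contDiff_freeInvariant : ContDiff ℝ 1 (freeInvariant ε : ℝ × E × E → E × E) := by
  unfold freeInvariant
  fun_prop

lemma position_freeInvariant (t : ℝ) (p : E × E) :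
    position ε t (freeInvariant ε (t, p)) = p.1 := by
  simp [position, freeInvariant, smul_smul, mul_assoc, ← Real.exp_add]

lemma position_comp_impulse (hε : ε ≠ 0) (t : ℝ) :
    position ε t ∘L impulse ε t = (0 : E →L[ℝ] E) := by
  ext F
  have hcancel : ε⁻¹ * Real.exp (t / ε) * (ε * Real.exp (-(t / ε))) = 1 := by
    rw [Real.exp_neg]
    field_simp
  simp [position, impulse, smul_smul, hcancel]

lemma position_comp_inl (t : ℝ) : position ε t ∘L .inl ℝ E E = .id ℝ E := by
  ext x
  simp [position]

lemma hasLineDerivAt_comp_fst {P : Type*} [AddCommGroup P] [Module ℝ P] {φ : ℝ → ℝ} {φ' t : ℝ}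
    (hφ : HasDerivAt φ φ' t) (p p' : P) :
    HasLineDerivAt ℝ (fun q : ℝ × P => φ q.1) φ' (t, p) (1, p') := by
  have htime : HasDerivAt (fun s : ℝ => t + s • 1) 1 0 := by
    simpa using (hasDerivAt_id (0 : ℝ)).const_add t
  exact (hφ.comp_of_eq (0 : ℝ) htime (by simp)).congr_deriv (mul_one φ')

lemma hasDerivAt_exp_div (ε t : ℝ) :
    HasDerivAt (fun s => Real.exp (s / ε)) (Real.exp (t / ε) / ε) t := by
  simpa [div_eq_mul_inv] using ((hasDerivAt_id t).div_const ε).exp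

lemma hasLineDerivAt_freeInvariant (hε : ε ≠ 0) (t : ℝ) (x v F : E) :
    HasLineDerivAt ℝ (freeInvariant ε) (impulse ε t F) (t, x, v) (1, v, -(ε⁻¹ • (v + F))) := by
  have hline (y u : E) : HasDerivAt (fun s : ℝ => y + s • u) u 0 := by
    simpa using ((hasDerivAt_id (0 : ℝ)).smul_const u).const_add y
  refine (((hline x v).add ((hline v _).const_smul ε)).prodMk
    (HasDerivAt.smul (hasLineDerivAt_comp_fst (hasDerivAt_exp_div ε t) (x, v) _)
      (hline v _))).congr_deriv ?_
  ext
  · simp [impulse, hε]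
  · simp only [impulse, zero_smul, add_zero, sub_apply, neg_apply, ContinuousLinearMap.inl_apply,
      Prod.neg_mk, smul_apply, ContinuousLinearMap.inr_apply, Prod.smul_mk, smul_zero,
      Prod.mk_sub_mk, neg_zero, zero_sub]
    module

lemma measurePreserving_freeInvariant [FiniteDimensional ℝ E] [MeasurableSpace E] [BorelSpace E]
    (μ : Measure E) [μ.IsAddHaarMeasure] (t : ℝ) :
    MeasurePreserving (fun p => freeInvariant ε (t, p))
      (ENNReal.ofReal (Real.exp (t / ε) ^ Module.finrank ℝ E) • μ.prod μ) (μ.prod μ) := by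
  have hexp := Real.exp_pos (t / ε)
  have hscale : MeasurePreserving (fun v : E => Real.exp (t / ε) • v)
      (ENNReal.ofReal (Real.exp (t / ε) ^ Module.finrank ℝ E) • μ) μ := by
    refine ⟨by fun_prop, ?_⟩
    rw [Measure.map_smul, Measure.map_addHaar_smul μ hexp.ne', smul_smul,
      abs_of_pos (by positivity), ← ENNReal.ofReal_mul (by positivity),
      mul_inv_cancel₀ (by positivity), ENNReal.ofReal_one, one_smul]
  have hshear : MeasurePreserving
      (fun p : E × E => (p.1 + (ε * (Real.exp (t / ε))⁻¹) • p.2, p.2)) (μ.prod μ) (μ.prod μ) :=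
    measurePreserving_add_fst (by fun_prop)
  rw [← Measure.prod_smul_right]
  convert hshear.comp ((MeasurePreserving.id μ).prod hscale) using 2 with p
  simp [freeInvariant, smul_smul, hexp.ne']

end FreeInvariant

section Transport

variable {E : Type*} [NormedAddCommGroup E] [NormedSpace ℝ E] {ε : ℝ}

/-- The phase-space density whose initial datum, in terms of the free invariants, is `g₀`, and
which is transported by the maps `Φ t` of the free invariants. The exponential factor compensates
the contraction of phase-space volume by friction. -/
noncomputable def transportedDensity (ε : ℝ) (g₀ : E × E → ℝ) (Φ : ℝ → E × E ≃ₜ E × E)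
    (q : ℝ × E × E) : ℝ :=
  Real.exp (q.1 / ε) ^ Module.finrank ℝ E * g₀ ((Φ q.1).symm (freeInvariant ε q))

variable {g₀ : E × E → ℝ} {Φ : ℝ → E × E ≃ₜ E × E}

lemma contDiff_transportedDensity (hg₀ : ContDiff ℝ 1 g₀)
    (hΦ : ContDiff ℝ 1 fun q : ℝ × E × E => (Φ q.1).symm q.2) :
    ContDiff ℝ 1 (transportedDensity ε g₀ Φ) := by
  have hcoord : ContDiff ℝ 1 fun q : ℝ × E × E => (Φ q.1).symm (freeInvariant ε q) :=
    hΦ.comp (contDiff_fst.prodMk contDiff_freeInvariant)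
  unfold transportedDensity
  fun_prop

lemma hasLineDerivAt_symm_freeInvariant (hε : ε ≠ 0)
    (hΦ : Differentiable ℝ fun q : ℝ × E × E => (Φ q.1).symm q.2) {F : ℝ × E → E}
    (hΦF : IsFlow (liftField (position ε) (impulse ε) F) Φ) (t : ℝ) (x v : E) :
    HasLineDerivAt ℝ (fun q : ℝ × E × E => (Φ q.1).symm (freeInvariant ε q)) 0
      (t, x, v) (1, v, -(ε⁻¹ • (v + F (t, x)))) := by
  let z : E × E := freeInvariant ε (t, x, v)
  have htime := hasLineDerivAt_comp_fst (hasDerivAt_id t) (x, v) (v, -(ε⁻¹ • (v + F (t, x))))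
  have hz : liftField (position ε) (impulse ε) F (t, z) = impulse ε t (F (t, x)) := by
    simp only [liftField, z, position_freeInvariant]
  rw [← hΦF.fderiv_symm_apply hΦ t z, hz]
  exact HasFDerivAt.comp_hasDerivAt_of_eq (0 : ℝ) (hΦ (t, z)).hasFDerivAt
    (HasDerivAt.prodMk htime (hasLineDerivAt_freeInvariant hε t x v (F (t, x)))) (by simp [z])

lemma fderiv_transportedDensity (hε : ε ≠ 0) (hg₀ : ContDiff ℝ 1 g₀)
    (hΦ : ContDiff ℝ 1 fun q : ℝ × E × E => (Φ q.1).symm q.2) {F : ℝ × E → E}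
    (hΦF : IsFlow (liftField (position ε) (impulse ε) F) Φ) (t : ℝ) (x v : E) :
    fderiv ℝ (transportedDensity ε g₀ Φ) (t, x, v) (1, v, 0) =
      ε⁻¹ * (Module.finrank ℝ E * transportedDensity ε g₀ Φ (t, x, v) +
        fderiv ℝ (transportedDensity ε g₀ Φ) (t, x, v) (0, 0, v + F (t, x))) := by
  let characteristic : ℝ × E × E := (1, v, -(ε⁻¹ • (v + F (t, x))))
  have hlabel : HasLineDerivAt ℝ (fun q : ℝ × E × E => g₀ ((Φ q.1).symm (freeInvariant ε q))) 0
      (t, x, v) characteristic := by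
    rw [← map_zero (fderiv ℝ g₀ ((Φ t).symm (freeInvariant ε (t, x, v))))]
    exact HasFDerivAt.comp_hasDerivAt_of_eq (0 : ℝ)
      (hg₀.differentiable one_ne_zero _).hasFDerivAt
      (hasLineDerivAt_symm_freeInvariant hε (hΦ.differentiable one_ne_zero) hΦF t x v) (by simp)
  have hfactor : HasLineDerivAt ℝ (fun q : ℝ × E × E => Real.exp (q.1 / ε) ^ Module.finrank ℝ E)
      (ε⁻¹ * (Module.finrank ℝ E * Real.exp (t / ε) ^ Module.finrank ℝ E))
      (t, x, v) characteristic := by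
    refine hasLineDerivAt_comp_fst (((hasDerivAt_exp_div ε t).pow _).congr_deriv ?_) _ _
    obtain hd | hd := (Module.finrank ℝ E).eq_zero_or_pos
    · simp [hd]
    · rw [mul_assoc, mul_div_assoc', pow_sub_one_mul hd.ne', mul_div_assoc', div_eq_inv_mul]
  have hcharacteristic : fderiv ℝ (transportedDensity ε g₀ Φ) (t, x, v) characteristic =
      ε⁻¹ * (Module.finrank ℝ E * transportedDensity ε g₀ Φ (t, x, v)) := by
    rw [← ((contDiff_transportedDensity hg₀ hΦ).differentiable one_ne_zero _).lineDeriv_eq_fderiv]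
    refine HasLineDerivAt.lineDeriv ((HasDerivAt.mul hfactor hlabel).congr_deriv ?_)
    simp [transportedDensity, mul_assoc]
  have hsplit : ((1, v, 0) : ℝ × E × E) = characteristic + ε⁻¹ • (0, 0, v + F (t, x)) := by
    simp [characteristic]
  rw [hsplit, map_add, map_smul, hcharacteristic, smul_eq_mul, mul_add]

end Transport

section Consistency

variable {E V : Type*} [NormedAddCommGroup E] [NormedSpace ℝ E] [FiniteDimensional ℝ E]
  [MeasurableSpace E] [BorelSpace E] [NormedAddCommGroup V] [NormedSpace ℝ V] {μ : Measure E}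
  [μ.IsAddHaarMeasure] {ε : ℝ} {g₀ : E × E → ℝ} {Φ : ℝ → E × E ≃ₜ E × E}

lemma measurePreserving_symm_freeInvariant {t : ℝ}
    (hΦμ : MeasurePreserving (Φ t) (μ.prod μ) (μ.prod μ)) :
    MeasurePreserving (fun p => (Φ t).symm (freeInvariant ε (t, p)))
      (ENNReal.ofReal (Real.exp (t / ε) ^ Module.finrank ℝ E) • μ.prod μ) (μ.prod μ) :=
  (hΦμ.symm (Φ t).toMeasurableEquiv).comp (measurePreserving_freeInvariant μ t)

lemma integrable_transportedDensity (hg₀ : Integrable g₀ (μ.prod μ)) {t : ℝ}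
    (hΦμ : MeasurePreserving (Φ t) (μ.prod μ) (μ.prod μ)) :
    Integrable (fun p => transportedDensity ε g₀ Φ (t, p)) (μ.prod μ) :=
  integrable_const_smul_comp (by positivity) (measurePreserving_symm_freeInvariant hΦμ) hg₀

lemma integral_transportedDensity_smul [CompleteSpace V] (hg₀ : Integrable g₀ (μ.prod μ)) {t : ℝ}
    (hΦμ : MeasurePreserving (Φ t) (μ.prod μ) (μ.prod μ)) {G : E → V} (hG : Continuous G) {M : ℝ}
    (hM : ∀ x, ‖G x‖ ≤ M) (x : E) :
    ∫ y, (∫ v, transportedDensity ε g₀ Φ (t, y, v) ∂μ) • G (x - y) ∂μ =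
      flowForce (μ.prod μ) g₀ G (position ε) Φ (t, x) := by
  have hposition (p : E × E) :
      position ε t (Φ t ((Φ t).symm (freeInvariant ε (t, p)))) = p.1 := by
    rw [Homeomorph.apply_symm_apply, position_freeInvariant]
  have hlabel : Integrable (fun z => g₀ z • G (x - position ε t (Φ t z))) (μ.prod μ) :=
    integrable_smul_of_norm_le hg₀ (by fun_prop) fun z => hM _
  have hphase : Integrable (fun p : E × E => transportedDensity ε g₀ Φ (t, p) • G (x - p.1))
      (μ.prod μ) :=
    integrable_smul_of_norm_le (integrable_transportedDensity hg₀ hΦμ) (by fun_prop) fun p => hM _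
  calc ∫ y, (∫ v, transportedDensity ε g₀ Φ (t, y, v) ∂μ) • G (x - y) ∂μ
      = ∫ p : E × E, transportedDensity ε g₀ Φ (t, p) • G (x - p.1) ∂μ.prod μ := by
        simp_rw [integral_prod _ hphase, integral_smul_const]
    _ = flowForce (μ.prod μ) g₀ G (position ε) Φ (t, x) := by
        rw [flowForce, meanField, ← integral_const_smul_comp (by positivity)
          (measurePreserving_symm_freeInvariant (ε := ε) hΦμ) hlabel.aestronglyMeasurable]
        simp only [hposition, transportedDensity, smul_smul]

end Consistency

end KineticAggregation

open KineticAggregation in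
theorem exists_smooth_kinetic_solution_general {E : Type*} [NormedAddCommGroup E]
    [NormedSpace ℝ E] [FiniteDimensional ℝ E] [MeasurableSpace E] [BorelSpace E] (μ : Measure E)
    [μ.IsAddHaarMeasure] {ε M : ℝ} (hε : ε ≠ 0) {gradK : E → E} {L : NNReal}
    (hbound : ∀ z, ‖gradK z‖ ≤ M) (hlip : LipschitzWith L gradK) {f₀ : E × E → ℝ}
    (hf₀ : ContDiff ℝ 1 f₀) (hf₀int : Integrable f₀ (μ.prod μ)) :
    ∃ f : ℝ × E × E → ℝ, ContDiff ℝ 1 f ∧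
      (∀ t, Integrable (fun p : E × E => f (t, p.1, p.2)) (μ.prod μ)) ∧
      (∀ x v, f (0, x, v) = f₀ (x, v)) ∧
      ∀ t x v, fderiv ℝ f (t, x, v) (1, v, 0) = ε⁻¹ * (Module.finrank ℝ E * f (t, x, v) +
        fderiv ℝ f (t, x, v) (0, 0, v + ∫ y, (∫ w, f (t, y, w) ∂μ) • gradK (x - y) ∂μ)) := by
  let g₀ (z : E × E) : ℝ := f₀ (z.1 + -(ε • z.2), z.2)
  have hg₀ : ContDiff ℝ 1 g₀ := by fun_prop
  have hshear : MeasurePreserving (fun z : E × E => (z.1 + -(ε • z.2), z.2)) (μ.prod μ)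
      (μ.prod μ) := measurePreserving_add_fst (f := fun v => -(ε • v)) (by fun_prop)
  have hg₀int : Integrable g₀ (μ.prod μ) := hshear.integrable_comp_of_integrable hf₀int
  obtain ⟨Φ, hΦ, hΦμ, hΦsymm⟩ := exists_meanField_flow (continuous_position (ε := ε))
    continuous_impulse (position_comp_impulse hε) position_comp_inl hg₀int hlip hbound
  refine ⟨transportedDensity ε g₀ Φ, contDiff_transportedDensity hg₀ hΦsymm,
    fun t => integrable_transportedDensity hg₀int (hΦμ t), fun x v => ?_, fun t x v => ?_⟩
  · have hlabel (z : E × E) : (Φ 0).symm z = z := (Φ 0).symm_apply_eq.2 (hΦ.map_zero z).symm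
    simp [transportedDensity, hlabel, freeInvariant, g₀]
  · rw [integral_transportedDensity_smul hg₀int (hΦμ t) hlip.continuous hbound]
    exact fderiv_transportedDensity hε hg₀ hΦsymm hΦ t x v

/-- **Existence of smooth solutions of the kinetic aggregation equation.**
If `f₀ ∈ C² ∩ L¹(ℝ^d × ℝ^d)` and `∇K ∈ W^{1,∞}(ℝ^d)` (bounded and Lipschitz),
then for any `T > 0` and `ε > 0` the kinetic equation
`∂ₜ f + v·∇ₓ f = (1/ε) ∇_v·((v + ∇K ∗ ρ) f)`, with
`ρ(t,x) = ∫ f(t,x,v) dv` and `(∇K ∗ ρ)(t,x) = ∫ ∇K(x-y) ρ(t,y) dy`, has a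
continuously differentiable solution `f` with `f(t,·,·) ∈ L¹` for each
`t ∈ [0,T]` and `f(0,·,·) = f₀`. Since `∇_v·((v + ∇K ∗ ρ) f)
= d·f + (v + ∇K ∗ ρ)·∇_v f`, the equation is written below using directional
derivatives of `f`. -/
theorem exists_smooth_kinetic_solution
    (d : ℕ) (T ε M : ℝ) (hT : 0 < T) (hε : 0 < ε)
    (gradK : EuclideanSpace ℝ (Fin d) → EuclideanSpace ℝ (Fin d)) (L : NNReal)
    (hbound : ∀ z, ‖gradK z‖ ≤ M)
    (hlip : LipschitzWith L gradK)
    (f₀ : EuclideanSpace ℝ (Fin d) × EuclideanSpace ℝ (Fin d) → ℝ)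
    (hf₀smooth : ContDiff ℝ 2 f₀)
    (hf₀int : Integrable f₀) :
    ∃ f : ℝ × EuclideanSpace ℝ (Fin d) × EuclideanSpace ℝ (Fin d) → ℝ,
      ContDiff ℝ 1 f ∧
      (∀ t ∈ Icc (0:ℝ) T,
        Integrable (fun p : EuclideanSpace ℝ (Fin d) × EuclideanSpace ℝ (Fin d) =>
          f (t, p.1, p.2))) ∧
      (∀ x v, f (0, x, v) = f₀ (x, v)) ∧
      (∀ t ∈ Icc (0:ℝ) T, ∀ x v,
        -- ∂ₜ f + v·∇ₓ f = (1/ε) (d · f + (v + ∇K ∗ ρ)·∇_v f), i.e. the kinetic equation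
        fderiv ℝ f (t, x, v) (1, v, 0) =
          ε⁻¹ * ((d : ℝ) * f (t, x, v) +
            fderiv ℝ f (t, x, v)
              (0, 0, v + ∫ y, (∫ w, f (t, y, w)) • gradK (x - y)))) := by
  obtain ⟨f, hf, hfint, hf₀, heq⟩ :=
    exists_smooth_kinetic_solution_general volume hε.ne' hbound hlip
      (hf₀smooth.of_le one_le_two) hf₀int
  exact ⟨f, hf, fun t _ => hfint t, hf₀, fun t _ => by simpa using heq t⟩
end
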